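/- Let p ∈ [1, ∞), q ∈ [p, ∞), p_* := min{p, 2}, N ≥ 1, H ≥ 1. There is a numerical constant c > 0 such that: for every Φ-function Φ ∈ (aInc)_p ∩ (Dec)_q and every N-dimensional subspace X_N ⊂ C(Ω) with X_N ∈ NI_{2,∞}(H), if x₁, …, x_m are i.i.d. random points in Ω distributed according to μ, then E( sup_{f ∈ X_N^Φ} | (1/m)Σ_{j=1}^m Φ(|f(x_j)|) − ∫_Ω Φ(|f|) dμ | ) ≤ c(A + A^{1/2}), where A = (1/m)·q²·a_Φ(p_*)·(Φ(R_Φ(p_*)·H^{2/p_*})/H²)·E( ( Σ_{n ≤ ⌊log N⌋} 2^{n/2}·(e_n(X_N^{p_*}, ‖·‖_{∞,x}))^{p_*/2} )² ). -/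

import Mathlib

open MeasureTheory

noncomputable section

/-- The sup-norm (uniform norm) `‖f‖_∞ = sup_{x ∈ Ω} |f x|` of a real-valued function. -/
def supNorm {Ω : Type*} (f : Ω → ℝ) : ℝ := ⨆ x, |f x|

/-- The Luxemburg functional `‖f‖_Φ = inf {λ > 0 : ∫ Φ(|f|/λ) dμ ≤ 1}`. -/
def luxNorm {Ω : Type*} [MeasurableSpace Ω] (μ : Measure Ω) (Φ : ℝ → ℝ) (f : Ω → ℝ) : ℝ :=
  sInf {lam : ℝ | 0 < lam ∧ ∫ x, Φ (|f x| / lam) ∂μ ≤ 1}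

/-- The discrete Luxemburg functional `‖f‖_{Φ,x}` with respect to the uniform discrete
probability measure `(1/m) ∑_{j=1}^m δ_{x_j}`. -/
def discLuxNorm {Ω : Type*} (Φ : ℝ → ℝ) {m : ℕ} (x : Fin m → Ω) (f : Ω → ℝ) : ℝ :=
  sInf {lam : ℝ | 0 < lam ∧ (∑ j, Φ (|f (x j)| / lam)) / (m : ℝ) ≤ 1}

/-- The weighted discrete Luxemburg functional `‖f‖_{Φ,x,λ}` with respect to the discrete
probability measure `∑_{j=1}^m λ_j δ_{x_j}`. -/
def wDiscLuxNorm {Ω : Type*} (Φ : ℝ → ℝ) {m : ℕ} (x : Fin m → Ω) (w : Fin m → ℝ)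
    (f : Ω → ℝ) : ℝ :=
  sInf {lam : ℝ | 0 < lam ∧ (∑ j, w j * Φ (|f (x j)| / lam)) ≤ 1}

/-- `Φ : [0,∞) → [0,∞)` is a Φ-prefunction: increasing, `Φ(0) = 0`, `Φ(0+) = 0`,
`Φ(∞) = ∞` (stated for a function on `ℝ`, with the relevant conditions on `[0,∞)`). -/
structure IsPhiPrefun (Φ : ℝ → ℝ) : Prop where
  mono : MonotoneOn Φ (Set.Ici 0)
  map_zero : Φ 0 = 0
  nonneg : ∀ t : ℝ, 0 ≤ t → 0 ≤ Φ t
  tendsto_zero : Filter.Tendsto Φ (nhdsWithin 0 (Set.Ioi 0)) (nhds 0)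
  tendsto_atTop : Filter.Tendsto Φ Filter.atTop Filter.atTop

/-- `Φ ∈ (aInc)_p` with constant `a`: `t ↦ Φ(t) t^{-p}` is almost increasing on `(0,∞)`. -/
def AIncP (Φ : ℝ → ℝ) (p a : ℝ) : Prop :=
  ∀ s t : ℝ, 0 < s → s < t → Φ s / s ^ p ≤ a * (Φ t / t ^ p)

/-- `Φ ∈ (Inc)_p` : `t ↦ Φ(t) t^{-p}` is increasing on `(0,∞)`. -/
def IncP (Φ : ℝ → ℝ) (p : ℝ) : Prop :=
  ∀ s t : ℝ, 0 < s → s < t → Φ s / s ^ p ≤ Φ t / t ^ p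

/-- `Φ ∈ (Dec)_q` : `t ↦ Φ(t) t^{-q}` is decreasing on `(0,∞)`. -/
def DecQ (Φ : ℝ → ℝ) (q : ℝ) : Prop :=
  ∀ s t : ℝ, 0 < s → s < t → Φ t / t ^ q ≤ Φ s / s ^ q

/-- `Φ ∈ (aDec)_q` with constant `b`: `t ↦ Φ(t) t^{-q}` is almost decreasing on `(0,∞)`. -/
def ADecQ (Φ : ℝ → ℝ) (q b : ℝ) : Prop :=
  ∀ s t : ℝ, 0 < s → s < t → Φ t / t ^ q ≤ b * (Φ s / s ^ q)

/-- `t ↦ Φ(t) t^{-p}` is almost increasing with constant `a` on `(t_*, ∞)`. -/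
def AIncPOn (Φ : ℝ → ℝ) (p a tstar : ℝ) : Prop :=
  ∀ s t : ℝ, tstar < s → s < t → Φ s / s ^ p ≤ a * (Φ t / t ^ p)

/-- `t ↦ Φ(t) t^{-q}` is almost decreasing with constant `b` on `(t_*, ∞)`. -/
def ADecQOn (Φ : ℝ → ℝ) (q b tstar : ℝ) : Prop :=
  ∀ s t : ℝ, tstar < s → s < t → Φ t / t ^ q ≤ b * (Φ s / s ^ q)

/-- Entropy numbers `e_n(F, d)` of a set `F` with respect to a distance-like function `dd`:
the infimum of `ε > 0` such that `F` can be covered by `2^{2^n}` (one, for `n = 0`)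
`ε`-balls centered in `F`. -/
def entropyNumD {X : Type*} (dd : X → X → ℝ) (F : Set X) (n : ℕ) : ℝ :=
  sInf {ε : ℝ | 0 < ε ∧ ∃ T : Finset X, ↑T ⊆ F ∧
    T.card ≤ (if n = 0 then 1 else 2 ^ 2 ^ n) ∧ ∀ f ∈ F, ∃ g ∈ T, dd f g < ε}

/-- Sampling numbers `ϱ_m(F, ‖·‖)`: recovery by linear methods from samples at `m` points. -/
def sampNum {Ω : Type*} (nrm : (Ω → ℝ) → ℝ) (F : Set (Ω → ℝ)) (m : ℕ) : ℝ :=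
  sInf {r : ℝ | ∃ (x : Fin m → Ω) (T : (Fin m → ℝ) →ₗ[ℝ] (Ω → ℝ)),
    r = ⨆ f ∈ F, nrm (fun y => f y - T (fun j => f (x j)) y)}

/-- Modified sampling numbers `ϱ*_m(F, ‖·‖)`: recovery by arbitrary methods mapping into a
subspace of dimension at most `m`, from samples at `m` points. -/
def sampNumStar {Ω : Type*} (nrm : (Ω → ℝ) → ℝ) (F : Set (Ω → ℝ)) (m : ℕ) : ℝ :=
  sInf {r : ℝ | ∃ (x : Fin m → Ω) (Y : Submodule ℝ (Ω → ℝ)), Module.finrank ℝ Y ≤ m ∧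
    ∃ T : (Fin m → ℝ) → Ω → ℝ, (∀ v, T v ∈ Y) ∧
    r = ⨆ f ∈ F, nrm (fun y => f y - T (fun j => f (x j)) y)}

/-- Kolmogorov width `d_N(F, ‖·‖_∞)` : infimum over `N`-dimensional subspaces of `C(Ω)` of the
worst-case best approximation error in the uniform norm. -/
def kolWidth {Ω : Type*} [TopologicalSpace Ω] (F : Set (Ω → ℝ)) (N : ℕ) : ℝ :=
  sInf {r : ℝ | ∃ X : Submodule ℝ (Ω → ℝ), Module.finrank ℝ X = N ∧
    (∀ u ∈ X, Continuous u) ∧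
    r = ⨆ f ∈ F, sInf ((fun u => supNorm (fun y => f y - u y)) '' (X : Set (Ω → ℝ)))}

end

/-!
The deviation is first symmetrized, which bounds its expectation by that of a Rademacher average
over the Orlicz ball. Fix the sample `x` and let `r = p_*`. On functions bounded by `M`, the
conditions `(Dec)_q` and `(aInc)_r` give
`|Φ(t) - Φ(s)|² ≤ q² a (Φ(M) / M^r) (Φ(t) + Φ(s)) |t - s|^r`,
so the sampled `ℓ²` increments of `f ↦ Φ(|f|)` are controlled by `‖f - g‖_{∞,x}^{r/2}`, times the
square root of `∑ⱼ Φ(|f(xⱼ)|) ≤ m (1 + S(x))`, where `S(x)` is the deviation itself. The nets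
provided by the entropy numbers of the `L^r` ball are chained up to level `log₂ N`; beyond it, a
volume argument in dimension at most `N` halves the radius at each level for a bounded price, and
the remaining sum is geometric. With the Cauchy–Schwarz inequality this yields
`E ≤ C √(A (1 + E))` for the expected deviation `E`, and solving for `E` gives `C² (A + √A)`.
-/

open scoped BigOperators

section Rademacher

variable {ι κ κ' κ'' : Type*} [Fintype ι]

lemma abs_intUnits_smul (u : ℤˣ) (x : ℝ) : |u • x| = |x| := by
  rcases Int.units_eq_one_or u with rfl | rfl <;> simp [Units.smul_def]

lemma abs_sum_intUnits_smul_le {a : ι → ℝ} {D : ℝ} (hD : 0 ≤ D) (ha : ∑ j, a j ^ 2 ≤ D ^ 2)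
    (ε : ι → ℤˣ) : |∑ j, ε j • a j| ≤ √(Fintype.card ι) * D := by
  calc |∑ j, ε j • a j| ≤ ∑ j, |a j| := by
        simpa only [abs_intUnits_smul] using Finset.abs_sum_le_sum_abs (fun j ↦ ε j • a j) _
    _ ≤ √(Fintype.card ι) * D := by
        refine le_of_sq_le_sq ?_ (by positivity)
        rw [mul_pow, Real.sq_sqrt (by positivity)]
        calc (∑ j, |a j|) ^ 2 ≤ Fintype.card ι * ∑ j, |a j| ^ 2 := sq_sum_le_card_mul_sum_sq
          _ ≤ Fintype.card ι * D ^ 2 := by simp_rw [sq_abs]; gcongr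

variable [DecidableEq ι]

/-- The Rademacher average `𝔼_ε sup_k |∑_j ε_j a_k(j)|` of a family of vectors `a_k`, over
uniformly random signs `ε`. As everywhere for real suprema, an unbounded family has supremum `0`. -/
noncomputable def rademacherAverage (a : κ → ι → ℝ) : ℝ :=
  𝔼 ε : ι → ℤˣ, ⨆ k, |∑ j, ε j • a k j|

lemma rademacherAverage_nonneg (a : κ → ι → ℝ) : 0 ≤ rademacherAverage a :=
  Finset.expect_nonneg fun _ _ ↦ Real.iSup_nonneg fun _ ↦ abs_nonneg _

lemma expect_exp_sum_intUnits_smul_le (a : ι → ℝ) :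
    𝔼 ε : ι → ℤˣ, Real.exp (∑ j, ε j • a j) ≤ Real.exp ((∑ j, a j ^ 2) / 2) := by
  have hcosh (j : ι) : Real.cosh (a j) = (∑ u : ℤˣ, Real.exp (u • a j)) / 2 := by
    simp [UnitsInt.univ, Units.smul_def, Real.cosh_eq]
  calc 𝔼 ε : ι → ℤˣ, Real.exp (∑ j, ε j • a j) = ∏ j, Real.cosh (a j) := by
        simp_rw [hcosh, Finset.prod_div_distrib, Finset.prod_univ_sum, Fintype.piFinset_univ,
          Fintype.expect_eq_sum_div_card, Real.exp_sum]
        simp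
    _ ≤ ∏ j, Real.exp (a j ^ 2 / 2) :=
        Finset.prod_le_prod (fun j _ ↦ (Real.cosh_pos _).le)
          fun j _ ↦ Real.cosh_le_exp_half_sq _
    _ = Real.exp ((∑ j, a j ^ 2) / 2) := by rw [Finset.sum_div, Real.exp_sum]

lemma expect_le_log_of_expect_exp_le {α : Type*} [Fintype α] [Nonempty α] {g : α → ℝ} {B : ℝ}
    (h : 𝔼 i, Real.exp (g i) ≤ B) : 𝔼 i, g i ≤ Real.log B := by
  have hB : 0 < B :=
    (Finset.expect_pos (fun i _ ↦ Real.exp_pos (g i)) Finset.univ_nonempty).trans_le h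
  have hpt (i : α) : g i ≤ (Real.log B - 1) + B⁻¹ * Real.exp (g i) := by
    have := Real.add_one_le_exp (g i - Real.log B)
    rw [Real.exp_sub, Real.exp_log hB, div_eq_inv_mul] at this
    linarith
  calc 𝔼 i, g i ≤ 𝔼 i, ((Real.log B - 1) + B⁻¹ * Real.exp (g i)) :=
        Finset.expect_le_expect fun i _ ↦ hpt i
    _ = (Real.log B - 1) + B⁻¹ * 𝔼 i, Real.exp (g i) := by
        rw [Finset.expect_add_distrib, Fintype.expect_const, Finset.mul_expect]
    _ ≤ (Real.log B - 1) + B⁻¹ * B := by gcongr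
    _ = Real.log B := by rw [inv_mul_cancel₀ hB.ne']; ring

lemma expect_exp_mul_iSup_abs_le [Fintype κ] [Nonempty κ] {a : κ → ι → ℝ} {D : ℝ}
    (ha : ∀ k, ∑ j, a k j ^ 2 ≤ D ^ 2) (l : ℝ) :
    𝔼 ε : ι → ℤˣ, Real.exp (l * ⨆ k, |∑ j, ε j • a k j|) ≤
      Fintype.card κ * (2 * Real.exp ((l * D) ^ 2 / 2)) := by
  have hmgf (k : κ) (c : ℝ) (hc : c ^ 2 = l ^ 2) :
      𝔼 ε : ι → ℤˣ, Real.exp (∑ j, ε j • (c * a k j)) ≤ Real.exp ((l * D) ^ 2 / 2) := by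
    refine (expect_exp_sum_intUnits_smul_le _).trans ?_
    simp_rw [mul_pow, hc, ← Finset.mul_sum]
    gcongr
    exact ha k
  have hpt (ε : ι → ℤˣ) : Real.exp (l * ⨆ k, |∑ j, ε j • a k j|) ≤
      ∑ k, (Real.exp (∑ j, ε j • (l * a k j)) + Real.exp (∑ j, ε j • (-l * a k j))) := by
    obtain ⟨k, hk⟩ := exists_eq_ciSup_of_finite (f := fun k ↦ |∑ j, ε j • a k j|)
    have hmul (c : ℝ) : ∑ j, ε j • (c * a k j) = c * ∑ j, ε j • a k j := by
      simp_rw [Finset.mul_sum, mul_smul_comm]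
    calc Real.exp (l * ⨆ k, |∑ j, ε j • a k j|)
        ≤ Real.exp |l * ∑ j, ε j • a k j| := by
          rw [← hk, abs_mul]; gcongr; exact le_abs_self l
      _ ≤ Real.exp (∑ j, ε j • (l * a k j)) + Real.exp (∑ j, ε j • (-l * a k j)) := by
          rw [hmul, hmul, neg_mul]; exact Real.exp_abs_le _
      _ ≤ _ := Finset.single_le_sum (f := fun k ↦ Real.exp (∑ j, ε j • (l * a k j)) +
          Real.exp (∑ j, ε j • (-l * a k j))) (fun _ _ ↦ by positivity) (Finset.mem_univ k)
  calc _ ≤ 𝔼 ε : ι → ℤˣ, ∑ k, (Real.exp (∑ j, ε j • (l * a k j)) +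
          Real.exp (∑ j, ε j • (-l * a k j))) := Finset.expect_le_expect fun ε _ ↦ hpt ε
    _ ≤ ∑ _k : κ, 2 * Real.exp ((l * D) ^ 2 / 2) := by
        simp_rw [Finset.expect_sum_comm, Finset.expect_add_distrib]
        gcongr with k
        linarith [hmgf k l rfl, hmgf k (-l) (neg_sq l)]
    _ = _ := by rw [Finset.sum_const, Finset.card_univ, nsmul_eq_mul]

lemma rademacherAverage_le_mul_sqrt [Fintype κ] {a : κ → ι → ℝ} {D : ℝ} {b : ℕ} (hD : 0 ≤ D)
    (ha : ∀ k, ∑ j, a k j ^ 2 ≤ D ^ 2) (hκ : Fintype.card κ ≤ 2 ^ b) :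
    rademacherAverage a ≤ D * √(2 * (b + 1)) := by
  rcases isEmpty_or_nonempty κ with _ | _
  · simp only [rademacherAverage, Real.iSup_of_isEmpty, Finset.expect_const_zero]
    positivity
  have hlog : Real.log (Fintype.card κ * 2) ≤ b + 1 := by
    calc Real.log (Fintype.card κ * 2) ≤ Real.log (2 ^ (b + 1)) := by
          rw [pow_succ]; gcongr; exact_mod_cast hκ
      _ ≤ ((b + 1 : ℕ) : ℝ) * 1 := by
          rw [Real.log_pow]; gcongr; linarith [Real.log_two_lt_d9]
      _ = b + 1 := by push_cast; ring
  -- The bound on `l * rademacherAverage a` holds for all `l`: a discriminant does the optimization.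
  have hquad (l : ℝ) : 0 ≤ D ^ 2 * (l * l) + -2 * rademacherAverage a * l + 2 * (b + 1) := by
    have h := expect_le_log_of_expect_exp_le (expect_exp_mul_iSup_abs_le ha l)
    rw [← Finset.mul_expect, ← mul_assoc, Real.log_mul (by positivity) (by positivity),
      Real.log_exp] at h
    change l * rademacherAverage a ≤ _ at h
    linarith [hlog]
  have hdiscrim := discrim_le_zero hquad
  refine le_of_sq_le_sq ?_ (by positivity)
  rw [mul_pow, Real.sq_sqrt (by positivity)]
  unfold discrim at hdiscrim
  linarith

lemma rademacherAverage_le_add [Finite κ'] [Finite κ''] {a : κ → ι → ℝ} {b : κ' → ι → ℝ}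
    {c : κ'' → ι → ℝ} (h : ∀ k, ∃ k' k'', a k = b k' + c k'') :
    rademacherAverage a ≤ rademacherAverage b + rademacherAverage c := by
  unfold rademacherAverage
  rw [← Finset.expect_add_distrib]
  refine Finset.expect_le_expect fun ε _ ↦ Real.iSup_le (fun k ↦ ?_) <|
    add_nonneg (Real.iSup_nonneg fun _ ↦ abs_nonneg _) (Real.iSup_nonneg fun _ ↦ abs_nonneg _)
  obtain ⟨k', k'', hk⟩ := h k
  calc |∑ j, ε j • a k j| = |∑ j, ε j • b k' j + ∑ j, ε j • c k'' j| := by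
        simp_rw [hk, Pi.add_apply, smul_add, Finset.sum_add_distrib]
    _ ≤ |∑ j, ε j • b k' j| + |∑ j, ε j • c k'' j| := abs_add_le _ _
    _ ≤ _ := add_le_add (le_ciSup (f := fun k ↦ |∑ j, ε j • b k j|) (Finite.bddAbove_range _) k')
        (le_ciSup (f := fun k ↦ |∑ j, ε j • c k j|) (Finite.bddAbove_range _) k'')

lemma rademacherAverage_le_add_of_net [Finite κ'] {a : κ → ι → ℝ} {b : κ' → ι → ℝ} {d : ℝ}
    (hd : 0 ≤ d) (h : ∀ k, ∃ k', ∑ j, (a k j - b k' j) ^ 2 ≤ d ^ 2) :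
    rademacherAverage a ≤ rademacherAverage b + √(Fintype.card ι) * d := by
  rw [← Fintype.expect_const (ι := ι → ℤˣ) (√(Fintype.card ι) * d)]
  unfold rademacherAverage
  rw [← Finset.expect_add_distrib]
  refine Finset.expect_le_expect fun ε _ ↦ Real.iSup_le (fun k ↦ ?_) <|
    add_nonneg (Real.iSup_nonneg fun _ ↦ abs_nonneg _) (by positivity)
  obtain ⟨k', hk⟩ := h k
  calc |∑ j, ε j • a k j| = |∑ j, ε j • b k' j + ∑ j, ε j • (a k j - b k' j)| := by
        simp_rw [smul_sub, Finset.sum_sub_distrib, add_sub_cancel]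
    _ ≤ |∑ j, ε j • b k' j| + |∑ j, ε j • (a k j - b k' j)| := abs_add_le _ _
    _ ≤ _ := add_le_add (le_ciSup (f := fun k ↦ |∑ j, ε j • b k j|) (Finite.bddAbove_range _) k')
        (abs_sum_intUnits_smul_le hd hk ε)

lemma rademacherAverage_restrict_le_add {a : κ → ι → ℝ} {T U : Finset κ} {d : ℝ} {b : ℕ}
    (hd : 0 ≤ d) (hU : U.card ≤ 2 ^ b) (h : ∀ u ∈ U, ∃ t ∈ T, ∑ j, (a u j - a t j) ^ 2 ≤ d ^ 2) :
    rademacherAverage (U.restrict a) ≤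
      rademacherAverage (T.restrict a) + d * √(2 * (b + 1)) := by
  choose! π hπ using h
  calc rademacherAverage (U.restrict a)
      ≤ rademacherAverage (T.restrict a) + rademacherAverage fun u : U ↦ a u - a (π u) :=
        rademacherAverage_le_add fun u ↦ ⟨⟨π u, (hπ u u.2).1⟩, u, by simp⟩
    _ ≤ _ := by
        gcongr
        exact rademacherAverage_le_mul_sqrt hd (fun u ↦ (hπ u u.2).2) (by simpa using hU)

theorem rademacherAverage_le_sum_of_nets {a : κ → ι → ℝ} {T : ℕ → Finset κ} {d : ℕ → ℝ} {b : ℕ → ℕ}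
    (hd : ∀ n, 0 ≤ d n) (hT : ∀ n, (T n).card ≤ 2 ^ b n) (hzero : ∀ t ∈ T 0, a t = 0)
    (hnet : ∀ n k, ∃ t ∈ T n, ∑ j, (a k j - a t j) ^ 2 ≤ d n ^ 2) (L : ℕ) :
    rademacherAverage a ≤
      ∑ n ∈ Finset.range L, d n * √(2 * (b (n + 1) + 1)) + √(Fintype.card ι) * d L := by
  have hchain : rademacherAverage ((T L).restrict a) ≤
      ∑ n ∈ Finset.range L, d n * √(2 * (b (n + 1) + 1)) := by
    induction L with
    | zero =>
      have : (T 0).restrict a = 0 := funext fun t ↦ hzero t t.2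
      rw [this]
      simp [rademacherAverage]
    | succ n ih =>
      rw [Finset.sum_range_succ]
      exact (rademacherAverage_restrict_le_add (hd n) (hT (n + 1)) fun u _ ↦ hnet n u).trans
        (by gcongr)
  refine (rademacherAverage_le_add_of_net (b := (T L).restrict a) (hd L) fun k ↦ ?_).trans
    (by gcongr)
  obtain ⟨t, ht, hkt⟩ := hnet L k
  exact ⟨⟨t, ht⟩, hkt⟩

end Rademacher

section Covering

variable {V κ : Type*} [NormedAddCommGroup V]

lemma exists_finset_pullback_cover {f : κ → V} {C : Finset V} {r : ℝ}
    (hC : ∀ k, ∃ c ∈ C, ‖f k - c‖ ≤ r) :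
    ∃ T : Finset κ, T.card ≤ C.card ∧ ∀ k, ∃ t ∈ T, ‖f k - f t‖ ≤ 2 * r := by
  classical
  let C₀ := {c ∈ C | ∃ k, ‖f k - c‖ ≤ r}
  have hC₀ : ∀ c : C₀, ∃ k, ‖f k - c‖ ≤ r := fun c ↦ (Finset.mem_filter.1 c.2).2
  choose t ht using hC₀
  refine ⟨Finset.univ.image t, Finset.card_image_le.trans ?_, fun k ↦ ?_⟩
  · simpa using Finset.card_filter_le _ _
  · obtain ⟨c, hc, hkc⟩ := hC k
    let c₀ : C₀ := ⟨c, Finset.mem_filter.2 ⟨hc, k, hkc⟩⟩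
    refine ⟨t c₀, Finset.mem_image_of_mem t (Finset.mem_univ _), ?_⟩
    calc ‖f k - f (t c₀)‖ ≤ ‖f k - c‖ + ‖f (t c₀) - c‖ := by
          rw [norm_sub_rev (f (t c₀))]; exact norm_sub_le_norm_sub_add_norm_sub _ _ _
      _ ≤ 2 * r := by linarith [ht c₀]

variable [NormedSpace ℝ V] [FiniteDimensional ℝ V]

lemma packingNumber_one_closedBall_two_le :
    Metric.packingNumber 1 (Metric.closedBall (0 : V) 2) ≤ 5 ^ Module.finrank ℝ V := by
  refine iSup_le fun C ↦ iSup₂_le fun hC hsep ↦ ?_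
  by_contra! hlt
  obtain ⟨s, hsC, hs⟩ := Set.exists_subset_encard_eq (Order.add_one_le_of_lt hlt)
  lift s to Finset V using Set.finite_of_encard_eq_coe (k := 5 ^ Module.finrank ℝ V + 1) (by simpa)
  have hcard : s.card ≤ 5 ^ Module.finrank ℝ V := by
    refine Besicovitch.card_le_of_separated s (fun c hc ↦ ?_) fun c hc d hd hcd ↦ ?_
    · simpa using hC (hsC hc)
    · have hlt : 1 < edist c d := hsep (hsC hc) (hsC hd) hcd
      rw [edist_dist, ENNReal.one_lt_ofReal, dist_eq_norm] at hlt
      exact hlt.le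
  rw [Set.encard_coe_eq_coe_finsetCard] at hs
  have : s.card = 5 ^ Module.finrank ℝ V + 1 := by exact_mod_cast hs
  omega

lemma exists_finset_cover_closedBall_two :
    ∃ s : Finset V, s.card ≤ 5 ^ Module.finrank ℝ V ∧
      ∀ v, ‖v‖ ≤ 2 → ∃ t ∈ s, ‖v - t‖ ≤ 1 := by
  have hcov := (Metric.coveringNumber_le_packingNumber 1 _).trans
    (packingNumber_one_closedBall_two_le (V := V))
  obtain ⟨C, -, hfin, hC, hcard⟩ := Metric.exists_set_encard_eq_coveringNumber
    (ne_top_of_le_ne_top (by simp) hcov)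
  lift C to Finset V using hfin
  refine ⟨C, ?_, fun v hv ↦ ?_⟩
  · rw [← hcard, Set.encard_coe_eq_coe_finsetCard] at hcov
    exact_mod_cast hcov
  · obtain ⟨t, ht, hvt⟩ := hC (mem_closedBall_zero_iff.2 hv)
    refine ⟨t, ht, ?_⟩
    rw [← dist_eq_norm, dist_edist]
    exact ENNReal.toReal_le_of_le_ofReal zero_le_one (by simpa using hvt)

lemma exists_finset_cover_half {f : κ → V} {C : Finset V} {r : ℝ} (hr : 0 < r)
    (hC : ∀ k, ∃ c ∈ C, ‖f k - c‖ ≤ r) :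
    ∃ C' : Finset V, C'.card ≤ 5 ^ Module.finrank ℝ V * C.card ∧
      ∀ k, ∃ c ∈ C', ‖f k - c‖ ≤ r / 2 := by
  classical
  obtain ⟨s, hs, hcover⟩ := exists_finset_cover_closedBall_two (V := V)
  refine ⟨Finset.image₂ (fun t c ↦ c + (r / 2) • t) s C,
    (Finset.card_image₂_le _ _ _).trans (by gcongr), fun k ↦ ?_⟩
  obtain ⟨c, hc, hkc⟩ := hC k
  obtain ⟨t, ht, hkt⟩ := hcover ((r / 2)⁻¹ • (f k - c)) <| by
    rw [norm_smul, Real.norm_of_nonneg (by positivity), inv_mul_le_iff₀ (by positivity)]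
    linarith
  refine ⟨_, Finset.mem_image₂_of_mem ht hc, ?_⟩
  have hscale : f k - (c + (r / 2) • t) = (r / 2) • ((r / 2)⁻¹ • (f k - c) - t) := by
    rw [smul_sub, smul_inv_smul₀ (by positivity), sub_sub]
  rw [hscale, norm_smul, Real.norm_of_nonneg (by positivity)]
  exact mul_le_of_le_one_right (by positivity) hkt

lemma exists_finset_cover_half_pow {f : κ → V} {C : Finset V} {r : ℝ} (hr : 0 < r)
    (hC : ∀ k, ∃ c ∈ C, ‖f k - c‖ ≤ r) (i : ℕ) :
    ∃ C' : Finset V, C'.card ≤ 5 ^ (Module.finrank ℝ V * i) * C.card ∧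
      ∀ k, ∃ c ∈ C', ‖f k - c‖ ≤ r * (1 / 2) ^ i := by
  induction i with
  | zero => exact ⟨C, by simp, by simpa using hC⟩
  | succ i ih =>
    obtain ⟨C₁, hcard₁, hcov₁⟩ := ih
    obtain ⟨C₂, hcard₂, hcov₂⟩ := exists_finset_cover_half (by positivity) hcov₁
    refine ⟨C₂, hcard₂.trans ?_, fun k ↦ ?_⟩
    · rw [mul_add_one, pow_add, mul_comm (5 ^ _) (5 ^ _), mul_assoc]
      gcongr
    · simpa only [pow_succ, mul_one_div, mul_div_assoc] using hcov₂ k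

end Covering

section Chaining

lemma sum_range_succ_mul_geometric_le (L : ℕ) :
    ∑ j ∈ Finset.range L, ((j : ℝ) + 1) * (3 / 4) ^ j ≤ 16 := by
  have hclosed : ∑ j ∈ Finset.range L, ((j : ℝ) + 1) * (3 / 4) ^ j =
      16 - (4 * L + 16) * (3 / 4) ^ L := by
    induction L with
    | zero => simp
    | succ n ih => rw [Finset.sum_range_succ, ih]; push_cast; ring
  rw [hclosed]
  exact sub_le_self _ (by positivity)

lemma two_rpow_half_sq (n : ℕ) : ((2 : ℝ) ^ ((n : ℝ) / 2)) ^ 2 = 2 ^ n := by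
  rw [← Real.rpow_mul_natCast zero_le_two, Nat.cast_ofNat, div_mul_cancel₀ _ two_ne_zero,
    Real.rpow_natCast]

/-- The binary logarithm of the size allowed for the `k`-th net of the chaining: entropy numbers
give nets of size `2 ^ 2 ^ k` up to level `n₀`, and each later level halves the radius at the
cost of a factor `2 ^ (6 * 2 ^ n₀)`, which suffices in dimension at most `2 ^ (n₀ + 1)`. -/
def netExponent (n₀ k : ℕ) : ℕ := 2 ^ min k n₀ * (1 + 6 * (k - n₀))

/-- The radius of the `k`-th net of the chaining, where covers of radius `ε n` are available for
`n ≤ n₀`. The factor `2` comes from moving the centres into the set being covered. -/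
noncomputable def netRadius (ε : ℕ → ℝ) (n₀ k : ℕ) : ℝ :=
  2 * (ε (min k n₀) * (1 / 2) ^ (k - n₀))

lemma sqrt_netExponent_succ_le_of_lt {n₀ k : ℕ} (hk : k < n₀) :
    √(2 * (netExponent n₀ (k + 1) + 1)) ≤ 3 * 2 ^ ((k : ℝ) / 2) := by
  rw [Real.sqrt_le_left (by positivity), mul_pow, two_rpow_half_sq, netExponent,
    min_eq_left (by omega), Nat.sub_eq_zero_of_le (by omega), pow_succ]
  have : (1 : ℝ) ≤ 2 ^ k := one_le_pow₀ one_le_two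
  push_cast
  linarith

lemma sqrt_netExponent_add_succ_le (n₀ j : ℕ) :
    √(2 * (netExponent n₀ (n₀ + j + 1) + 1)) ≤ 4 * (j + 1) * 2 ^ ((n₀ : ℝ) / 2) := by
  rw [Real.sqrt_le_left (by positivity), mul_pow, two_rpow_half_sq, netExponent,
    min_eq_right (by omega), show n₀ + j + 1 - n₀ = j + 1 by omega]
  have : (1 : ℝ) ≤ 2 ^ n₀ := one_le_pow₀ one_le_two
  push_cast
  calc (2 : ℝ) * (2 ^ n₀ * (1 + 6 * (j + 1)) + 1) ≤ (16 + 12 * j) * 2 ^ n₀ := by linarith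
    _ ≤ (4 * (j + 1)) ^ 2 * 2 ^ n₀ := by gcongr; nlinarith [(Nat.cast_nonneg j : (0 : ℝ) ≤ j)]

lemma sum_mul_sqrt_netExponent_le {ρ : ℕ → ℝ} {n₀ : ℕ} (hρ : ∀ k, 0 ≤ ρ k)
    (hgeom : ∀ j, ρ (n₀ + j) ≤ ρ n₀ * (3 / 4) ^ j) (L : ℕ) :
    ∑ k ∈ Finset.range (n₀ + L), ρ k * √(2 * (netExponent n₀ (k + 1) + 1)) ≤
      64 * ∑ n ∈ Finset.range (n₀ + 1), 2 ^ ((n : ℝ) / 2) * ρ n := by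
  have hhead : ∑ k ∈ Finset.range n₀, ρ k * √(2 * (netExponent n₀ (k + 1) + 1)) ≤
      3 * ∑ n ∈ Finset.range n₀, 2 ^ ((n : ℝ) / 2) * ρ n := by
    rw [Finset.mul_sum]
    refine Finset.sum_le_sum fun k hk ↦ ?_
    calc _ ≤ ρ k * (3 * 2 ^ ((k : ℝ) / 2)) := by
          gcongr
          exacts [hρ k, sqrt_netExponent_succ_le_of_lt (Finset.mem_range.1 hk)]
      _ = 3 * (2 ^ ((k : ℝ) / 2) * ρ k) := by ring
  have htail : ∑ j ∈ Finset.range L, ρ (n₀ + j) * √(2 * (netExponent n₀ (n₀ + j + 1) + 1)) ≤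
      64 * (2 ^ ((n₀ : ℝ) / 2) * ρ n₀) := by
    calc _ ≤ ∑ j ∈ Finset.range L,
            (ρ n₀ * (3 / 4) ^ j) * (4 * (j + 1) * 2 ^ ((n₀ : ℝ) / 2)) := by
          gcongr with j
          exacts [mul_nonneg (hρ n₀) (by positivity), hgeom j, sqrt_netExponent_add_succ_le n₀ j]
      _ = 4 * (2 ^ ((n₀ : ℝ) / 2) * ρ n₀) * ∑ j ∈ Finset.range L, ((j : ℝ) + 1) * (3 / 4) ^ j := by
          rw [Finset.mul_sum]; exact Finset.sum_congr rfl fun _ _ ↦ by ring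
      _ ≤ 4 * (2 ^ ((n₀ : ℝ) / 2) * ρ n₀) * 16 := by
          gcongr
          exacts [mul_nonneg zero_le_four (mul_nonneg (by positivity) (hρ n₀)),
            sum_range_succ_mul_geometric_le L]
      _ = _ := by ring
  have hhead_nonneg : 0 ≤ ∑ n ∈ Finset.range n₀, (2 : ℝ) ^ ((n : ℝ) / 2) * ρ n :=
    Finset.sum_nonneg fun n _ ↦ mul_nonneg (by positivity) (hρ n)
  rw [Finset.sum_range_add, Finset.sum_range_succ]
  linarith

lemma one_half_rpow_le_three_quarters {α : ℝ} (hα : 1 / 2 ≤ α) : (1 / 2 : ℝ) ^ α ≤ 3 / 4 := by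
  calc (1 / 2 : ℝ) ^ α ≤ (1 / 2) ^ (1 / 2 : ℝ) :=
        Real.rpow_le_rpow_of_exponent_ge (by norm_num) (by norm_num) hα
    _ = √(1 / 2) := (Real.sqrt_eq_rpow _).symm
    _ ≤ 3 / 4 := by rw [Real.sqrt_le_left (by norm_num)]; norm_num

lemma netRadius_nonneg {ε : ℕ → ℝ} (hε : ∀ n, 0 ≤ ε n) (n₀ k : ℕ) : 0 ≤ netRadius ε n₀ k :=
  mul_nonneg zero_le_two (mul_nonneg (hε _) (by positivity))

lemma netRadius_add_rpow_le {ε : ℕ → ℝ} (hε : ∀ n, 0 ≤ ε n) {α : ℝ} (hα : 1 / 2 ≤ α) (n₀ j : ℕ) :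
    netRadius ε n₀ (n₀ + j) ^ α ≤ netRadius ε n₀ n₀ ^ α * (3 / 4) ^ j := by
  have hsplit : netRadius ε n₀ (n₀ + j) = netRadius ε n₀ n₀ * (1 / 2) ^ j := by
    simp [netRadius, mul_assoc]
  have hn₀ := netRadius_nonneg hε n₀ n₀
  rw [hsplit, Real.mul_rpow hn₀ (by positivity), ← Real.rpow_pow_comm (by norm_num)]
  gcongr
  exact one_half_rpow_le_three_quarters hα

lemma netRadius_rpow_le {ε : ℕ → ℝ} (hε : ∀ n, 0 ≤ ε n) {α : ℝ} (hα : α ≤ 1) {n₀ n : ℕ}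
    (hn : n ≤ n₀) : netRadius ε n₀ n ^ α ≤ 2 * ε n ^ α := by
  have htwo : (2 : ℝ) ^ α ≤ 2 := by
    simpa using Real.rpow_le_rpow_of_exponent_le one_le_two hα
  have : netRadius ε n₀ n = 2 * ε n := by simp [netRadius, hn]
  rw [this, Real.mul_rpow zero_le_two (hε n)]
  gcongr
  exact Real.rpow_nonneg (hε n) α

variable {V κ : Type*} [NormedAddCommGroup V] [NormedSpace ℝ V] [FiniteDimensional ℝ V]

lemma exists_finset_net {f : κ → V} {ε : ℕ → ℝ} (hε : ∀ n, 0 < ε n)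
    (hC : ∀ n, ∃ C : Finset V, C.card ≤ 2 ^ 2 ^ n ∧ ∀ k, ∃ c ∈ C, ‖f k - c‖ ≤ ε n)
    {n₀ : ℕ} (hdim : Module.finrank ℝ V ≤ 2 ^ (n₀ + 1)) (n : ℕ) :
    ∃ T : Finset κ, T.card ≤ 2 ^ netExponent n₀ n ∧
      ∀ k, ∃ t ∈ T, ‖f k - f t‖ ≤ netRadius ε n₀ n := by
  obtain ⟨C, hCcard, hCcov⟩ := hC (min n n₀)
  obtain ⟨C', hC'card, hC'cov⟩ := exists_finset_cover_half_pow (hε _) hCcov (n - n₀)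
  obtain ⟨T, hTcard, hTcov⟩ := exists_finset_pullback_cover hC'cov
  refine ⟨T, hTcard.trans (hC'card.trans ?_), hTcov⟩
  have hdim' : Module.finrank ℝ V * (n - n₀) ≤ 2 ^ (min n n₀ + 1) * (n - n₀) := by
    rcases le_total n n₀ with h | h
    · simp [Nat.sub_eq_zero_of_le h]
    · rw [min_eq_right h]; gcongr
  calc 5 ^ (Module.finrank ℝ V * (n - n₀)) * C.card
      ≤ (2 ^ 3) ^ (2 ^ (min n n₀ + 1) * (n - n₀)) * 2 ^ 2 ^ min n n₀ := by
        gcongr <;> norm_num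
    _ = 2 ^ netExponent n₀ n := by
        rw [← pow_mul, ← pow_add, netExponent]; congr 1; ring

lemma exists_finset_nets_of_base {f : κ → V} {ε : ℕ → ℝ} (hε : ∀ n, 0 < ε n)
    (hC : ∀ n, ∃ C : Finset V, C.card ≤ (if n = 0 then 1 else 2 ^ 2 ^ n) ∧
      ∀ k, ∃ c ∈ C, ‖f k - c‖ ≤ ε n)
    {n₀ : ℕ} (hdim : Module.finrank ℝ V ≤ 2 ^ (n₀ + 1)) (k₀ : κ) :
    ∃ T : ℕ → Finset κ, T 0 = {k₀} ∧ (∀ n, (T n).card ≤ 2 ^ netExponent n₀ n) ∧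
      ∀ n k, ∃ t ∈ T n, ‖f k - f t‖ ≤ netRadius ε n₀ n := by
  have hbase (k : κ) : ‖f k - f k₀‖ ≤ netRadius ε n₀ 0 := by
    obtain ⟨C, hcard, hcov⟩ := hC 0
    obtain ⟨c, hc, hkc⟩ := hcov k
    obtain ⟨c₀, hc₀, hkc₀⟩ := hcov k₀
    obtain rfl : c = c₀ := Finset.card_le_one.1 hcard c hc c₀ hc₀
    have := norm_sub_le_norm_sub_add_norm_sub (f k) c (f k₀)
    rw [norm_sub_rev c] at this
    simp only [netRadius, Nat.zero_min, Nat.zero_sub, pow_zero, mul_one]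
    linarith
  have hC' (n : ℕ) : ∃ C : Finset V, C.card ≤ 2 ^ 2 ^ n ∧ ∀ k, ∃ c ∈ C, ‖f k - c‖ ≤ ε n := by
    obtain ⟨C, hcard, hcov⟩ := hC n
    exact ⟨C, hcard.trans (by split_ifs <;> [exact Nat.one_le_two_pow; rfl]), hcov⟩
  choose T hTcard hTcov using exists_finset_net hε hC' hdim
  refine ⟨Function.update T 0 {k₀}, by simp, fun n ↦ ?_, fun n k ↦ ?_⟩ <;>
    rcases eq_or_ne n 0 with rfl | hn
  · simpa using Nat.one_le_two_pow
  · simpa [hn] using hTcard n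
  · exact ⟨k₀, by simp, hbase k⟩
  · simpa [hn] using hTcov n k

theorem rademacherAverage_le_sum_covering_radii {ι : Type*} [Fintype ι] [DecidableEq ι]
    {a : κ → ι → ℝ} {f : κ → V} {D α : ℝ} (hD : 0 ≤ D) (hα : 1 / 2 ≤ α) (hα' : α ≤ 1)
    (ha : ∀ k l, ∑ j, (a k j - a l j) ^ 2 ≤ (D * ‖f k - f l‖ ^ α) ^ 2) {k₀ : κ} (hk₀ : a k₀ = 0)
    {n₀ : ℕ} (hdim : Module.finrank ℝ V ≤ 2 ^ (n₀ + 1)) {ε : ℕ → ℝ} (hε : ∀ n, 0 < ε n)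
    (hC : ∀ n, ∃ C : Finset V, C.card ≤ (if n = 0 then 1 else 2 ^ 2 ^ n) ∧
      ∀ k, ∃ c ∈ C, ‖f k - c‖ ≤ ε n) :
    rademacherAverage a ≤
      128 * D * ∑ n ∈ Finset.range (n₀ + 1), 2 ^ ((n : ℝ) / 2) * ε n ^ α := by
  obtain ⟨T, hT₀, hTcard, hTcov⟩ := exists_finset_nets_of_base hε hC hdim k₀
  have hε' (n : ℕ) : 0 ≤ ε n := (hε n).le
  set ρ : ℕ → ℝ := fun n ↦ netRadius ε n₀ n ^ α
  have hρ (n : ℕ) : 0 ≤ ρ n := Real.rpow_nonneg (netRadius_nonneg hε' n₀ n) α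
  have hgeom : ∀ j, ρ (n₀ + j) ≤ ρ n₀ * (3 / 4) ^ j := netRadius_add_rpow_le hε' hα n₀
  have hnet (n : ℕ) (k : κ) : ∃ t ∈ T n, ∑ j, (a k j - a t j) ^ 2 ≤ (D * ρ n) ^ 2 := by
    obtain ⟨t, ht, hkt⟩ := hTcov n k
    exact ⟨t, ht, (ha k t).trans <| by
      gcongr; exact Real.rpow_le_rpow (norm_nonneg _) hkt (by linarith)⟩
  have hchain (L : ℕ) : rademacherAverage a ≤
      D * (64 * ∑ n ∈ Finset.range (n₀ + 1), 2 ^ ((n : ℝ) / 2) * ρ n) +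
        √(Fintype.card ι) * (D * (ρ n₀ * (3 / 4) ^ L)) := by
    refine (rademacherAverage_le_sum_of_nets (fun n ↦ mul_nonneg hD (hρ n)) hTcard
      (by simp [hT₀, hk₀]) hnet (n₀ + L)).trans ?_
    simp_rw [mul_assoc D, ← Finset.mul_sum]
    gcongr
    exacts [sum_mul_sqrt_netExponent_le hρ hgeom L, hgeom L]
  have hlim : Filter.Tendsto (fun L : ℕ ↦ √(Fintype.card ι) * (D * (ρ n₀ * (3 / 4) ^ L)))
      Filter.atTop (nhds (√(Fintype.card ι) * (D * (ρ n₀ * 0)))) :=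
    (((tendsto_pow_atTop_nhds_zero_of_lt_one (by norm_num) (by norm_num)).const_mul _).const_mul
      _).const_mul _
  calc rademacherAverage a
      ≤ D * (64 * ∑ n ∈ Finset.range (n₀ + 1), 2 ^ ((n : ℝ) / 2) * ρ n) := by
        simpa using ge_of_tendsto' (hlim.const_add _) hchain
    _ ≤ D * (64 * ∑ n ∈ Finset.range (n₀ + 1), 2 ^ ((n : ℝ) / 2) * (2 * ε n ^ α)) := by
        gcongr with n hn
        exact netRadius_rpow_le hε' hα' (Nat.lt_succ_iff.1 (Finset.mem_range.1 hn))
    _ = 128 * D * ∑ n ∈ Finset.range (n₀ + 1), 2 ^ ((n : ℝ) / 2) * ε n ^ α := by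
        simp_rw [mul_left_comm _ (2 : ℝ), ← Finset.mul_sum]; ring

end Chaining

section PhiFunctions

variable {Φ : ℝ → ℝ} {q r a s t M : ℝ}

lemma AIncP.div_rpow_le (hi : AIncP Φ r a) (ha : 1 ≤ a) (hs : 0 < s) (hst : s ≤ t)
    (hΦt : 0 ≤ Φ t) : Φ s / s ^ r ≤ a * (Φ t / t ^ r) := by
  rcases hst.eq_or_lt with rfl | hst
  · exact le_mul_of_one_le_left (by positivity) ha
  · exact hi s t hs hst

namespace IsPhiPrefun

lemma pos (hΦ : IsPhiPrefun Φ) (hd : DecQ Φ q) (ht : 0 < t) : 0 < Φ t := by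
  obtain ⟨u, hu, htu⟩ := ((hΦ.tendsto_atTop.eventually_gt_atTop 0).and
    (Filter.eventually_gt_atTop t)).exists
  have hu' : 0 < Φ u / u ^ q := div_pos hu (Real.rpow_pos_of_pos (ht.trans htu) q)
  exact (div_pos_iff_of_pos_right (Real.rpow_pos_of_pos ht q)).1 (hu'.trans_le (hd t u ht htu))

lemma mul_div_rpow_le (hΦ : IsPhiPrefun Φ) (hd : DecQ Φ q) (hq : 0 < q) (hs : 0 ≤ s)
    (hst : s ≤ t) : Φ t * (s / t) ^ q ≤ Φ s := by
  rcases hs.eq_or_lt with rfl | hs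
  · simp [hΦ.map_zero, Real.zero_rpow hq.ne']
  have ht : 0 < t := hs.trans_le hst
  rcases hst.eq_or_lt with rfl | hst
  · simp [ht.ne']
  have hsq : 0 < s ^ q := Real.rpow_pos_of_pos hs q
  calc Φ t * (s / t) ^ q = Φ t / t ^ q * s ^ q := by rw [Real.div_rpow hs.le ht.le]; ring
    _ ≤ Φ s / s ^ q * s ^ q := by gcongr ?_ * _; exact hd s t hs hst
    _ = Φ s := div_mul_cancel₀ _ hsq.ne'

lemma abs_sub_le (hΦ : IsPhiPrefun Φ) (hd : DecQ Φ q) (hq : 1 ≤ q) (hs : 0 ≤ s) (ht : 0 ≤ t) :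
    |Φ t - Φ s| ≤ q * Φ (max s t) * (|t - s| / max s t) := by
  wlog hst : s ≤ t generalizing s t
  · simpa only [abs_sub_comm, max_comm] using this ht hs (le_of_not_ge hst)
  rcases ht.eq_or_lt with rfl | htpos
  · simp [le_antisymm hst hs]
  rw [max_eq_right hst, abs_of_nonneg (sub_nonneg.2 (hΦ.mono hs ht hst)),
    abs_of_nonneg (sub_nonneg.2 hst)]
  have hbernoulli : 1 + q * (s / t - 1) ≤ (s / t) ^ q := by
    simpa using one_add_mul_self_le_rpow_one_add (s := s / t - 1)
      (by linarith [div_nonneg hs ht]) hq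
  calc Φ t - Φ s ≤ Φ t - Φ t * (1 + q * (s / t - 1)) :=
        sub_le_sub_left ((mul_le_mul_of_nonneg_left hbernoulli (hΦ.nonneg t ht)).trans
          (hΦ.mul_div_rpow_le hd (one_pos.trans_le hq) hs hst)) _
    _ = q * Φ t * ((t - s) / t) := by field_simp; ring

lemma continuousOn (hΦ : IsPhiPrefun Φ) (hd : DecQ Φ q) (hq : 1 ≤ q) :
    ContinuousOn Φ (Set.Ici 0) := by
  intro t ht
  rcases (Set.mem_Ici.1 ht).eq_or_lt with rfl | ht
  · rw [← continuousWithinAt_Ioi_iff_Ici, ContinuousWithinAt, hΦ.map_zero]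
    exact hΦ.tendsto_zero
  refine (continuousAt_of_locally_lipschitz ht (q * Φ (2 * t) / t) fun u hu ↦
    ?_).continuousWithinAt
  obtain ⟨hu, hu'⟩ := abs_lt.1 hu
  have hmax : max t u ≤ 2 * t := max_le (by linarith) (by linarith)
  have hΦmax : Φ (max t u) ≤ Φ (2 * t) :=
    hΦ.mono (ht.le.trans (le_max_left t u)) (Set.mem_Ici.2 (by linarith)) hmax
  calc dist (Φ u) (Φ t) ≤ q * Φ (max t u) * (|u - t| / max t u) :=
        hΦ.abs_sub_le hd hq ht.le (by linarith)
    _ ≤ q * Φ (2 * t) * (|u - t| / t) := by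
        have := hΦ.nonneg (2 * t) (by linarith)
        gcongr
        exact le_max_left t u
    _ = q * Φ (2 * t) / t * dist u t := by rw [Real.dist_eq]; ring

lemma sq_sub_le (hΦ : IsPhiPrefun Φ) (hd : DecQ Φ q) (hq : 1 ≤ q) (hi : AIncP Φ r a)
    (ha : 1 ≤ a) (hr : 0 < r) (hr₂ : r ≤ 2) (hs : s ∈ Set.Icc 0 M) (ht : t ∈ Set.Icc 0 M) :
    (Φ t - Φ s) ^ 2 ≤ q ^ 2 * (a * (Φ M / M ^ r)) * (Φ t + Φ s) * |t - s| ^ r := by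
  set u := max s t
  have hu : 0 ≤ u := hs.1.trans (le_max_left s t)
  rcases hu.eq_or_lt with hu₀ | hu₀
  · obtain rfl : s = 0 := le_antisymm (hu₀ ▸ le_max_left s t) hs.1
    obtain rfl : t = 0 := le_antisymm (hu₀ ▸ le_max_right 0 t) ht.1
    simp [hΦ.map_zero]
  have huM : u ≤ M := max_le hs.2 ht.2
  have hΦu : 0 ≤ Φ u := hΦ.nonneg u hu
  have hΦM : 0 ≤ Φ M := hΦ.nonneg M (hu.trans huM)
  have hΦadd : Φ u ≤ Φ t + Φ s := by
    rcases max_choice s t with h | h <;> rw [show u = _ from h]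
    exacts [le_add_of_nonneg_left (hΦ.nonneg t ht.1), le_add_of_nonneg_right (hΦ.nonneg s hs.1)]
  have hratio : |t - s| / u ≤ 1 := div_le_one_of_le₀
    (abs_sub_le_of_nonneg_of_le ht.1 (le_max_right s t) hs.1 (le_max_left s t)) hu
  calc (Φ t - Φ s) ^ 2 ≤ (q * Φ u * (|t - s| / u)) ^ 2 := by
        rw [← sq_abs]
        gcongr
        exact hΦ.abs_sub_le hd hq hs.1 ht.1
    _ = q ^ 2 * Φ u * Φ u * (|t - s| / u) ^ (2 : ℝ) := by rw [Real.rpow_two]; ring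
    _ ≤ q ^ 2 * Φ u * Φ u * (|t - s| / u) ^ r := by
        gcongr ?_ * ?_
        exact Real.rpow_le_rpow_of_exponent_ge' (by positivity) hratio hr.le hr₂
    _ = q ^ 2 * (Φ u / u ^ r) * Φ u * |t - s| ^ r := by
        rw [Real.div_rpow (abs_nonneg _) hu]; ring
    _ ≤ q ^ 2 * (a * (Φ M / M ^ r)) * (Φ t + Φ s) * |t - s| ^ r := by
        have hM : 0 ≤ M := hu.trans huM
        gcongr q ^ 2 * ?_ * ?_ * _
        exact hi.div_rpow_le ha hu₀ huM hΦM

end IsPhiPrefun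

end PhiFunctions

section Symmetrization

variable {ι κ Z Ω : Type*} [Fintype ι]

lemma bddAbove_range_abs_sum {a : κ → ι → ℝ} {B : ℝ} (ha : ∀ k j, |a k j| ≤ B) :
    BddAbove (Set.range fun k ↦ |∑ j, a k j|) := by
  refine ⟨∑ _j : ι, B, ?_⟩
  rintro _ ⟨k, rfl⟩
  exact (Finset.abs_sum_le_sum_abs _ _).trans (Finset.sum_le_sum fun j _ ↦ ha k j)

lemma integrable_iSup_abs_sum [TopologicalSpace Z] [MeasurableSpace Z] [BorelSpace Z]
    {ν : Measure Z} [IsFiniteMeasure ν] {F : κ → ι → Z → ℝ} (hF : ∀ k j, Continuous (F k j))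
    {B : ℝ} (hB : ∀ k j z, |F k j z| ≤ B) :
    Integrable (fun z ↦ ⨆ k, |∑ j, F k j z|) ν := by
  have hmeas : Measurable fun z ↦ ⨆ k, |∑ j, F k j z| :=
    (lowerSemicontinuous_ciSup (fun z ↦ bddAbove_range_abs_sum fun k j ↦ hB k j z) fun k ↦
      (continuous_finsetSum _ fun j _ ↦ hF k j).abs.lowerSemicontinuous).measurable
  refine Integrable.of_bound hmeas.aestronglyMeasurable (∑ _j : ι, |B|) (.of_forall fun z ↦ ?_)
  rw [Real.norm_of_nonneg (Real.iSup_nonneg fun _ ↦ abs_nonneg _)]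
  exact Real.iSup_le (fun k ↦ (Finset.abs_sum_le_sum_abs _ _).trans
    (Finset.sum_le_sum fun j _ ↦ (hB k j z).trans (le_abs_self B))) (by positivity)

lemma integral_pi_comp {Ω' : Type*} [MeasurableSpace Ω] [MeasurableSpace Ω'] {μ : Measure Ω}
    {ν : Measure Ω'} [SigmaFinite μ] [SigmaFinite ν] {π : Ω' → Ω} (hπ : MeasurePreserving π ν μ)
    {F : (ι → Ω) → ℝ} (hF : AEStronglyMeasurable F (Measure.pi fun _ ↦ μ)) :
    ∫ z, F (fun j ↦ π (z j)) ∂Measure.pi (fun _ : ι ↦ ν) =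
      ∫ x, F x ∂Measure.pi fun _ : ι ↦ μ := by
  have hπ' := measurePreserving_pi (fun _ : ι ↦ ν) (fun _ ↦ μ) fun _ ↦ hπ
  rw [← hπ'.map_eq, integral_map hπ'.aemeasurable (hπ'.map_eq.symm ▸ hF)]

lemma integral_pi_prod_swap [MeasurableSpace Ω] (μ : Measure Ω) [SigmaFinite μ] (ε : ι → ℤˣ)
    (F : (ι → Ω × Ω) → ℝ) :
    ∫ z, F (fun j ↦ if ε j = 1 then z j else (z j).swap) ∂Measure.pi (fun _ : ι ↦ μ.prod μ) =
      ∫ z, F z ∂Measure.pi (fun _ : ι ↦ μ.prod μ) := by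
  let τ : (ι → Ω × Ω) ≃ᵐ (ι → Ω × Ω) := MeasurableEquiv.piCongrRight fun j ↦
    if ε j = 1 then .refl _ else .prodComm
  have hτ : MeasurePreserving τ (Measure.pi fun _ ↦ μ.prod μ) (Measure.pi fun _ ↦ μ.prod μ) := by
    refine measurePreserving_pi _ _ fun j ↦ ?_
    by_cases h : ε j = 1
    · simpa [h] using! MeasurePreserving.id (μ.prod μ)
    · simpa [h] using! Measure.measurePreserving_swap (μ := μ) (ν := μ)
  refine (integral_congr_ae (.of_forall fun z ↦ congrArg F (funext fun j ↦ ?_))).trans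
    (hτ.integral_comp' F)
  change _ = (if ε j = 1 then MeasurableEquiv.refl _ else .prodComm) (z j)
  split_ifs <;> rfl

variable [TopologicalSpace Ω] [SecondCountableTopology Ω] [MeasurableSpace Ω] [BorelSpace Ω]
  {μ : Measure Ω} [IsProbabilityMeasure μ] {g : κ → Ω → ℝ} {B : ℝ}

lemma iSup_abs_sum_sub_integral_le (hg : ∀ k, Continuous (g k)) (hB : ∀ k y, |g k y| ≤ B)
    (x : ι → Ω) :
    ⨆ k, |∑ j, (g k (x j) - ∫ y, g k y ∂μ)| ≤
      ∫ x' : ι → Ω, ⨆ k, |∑ j, (g k (x j) - g k (x' j))| ∂Measure.pi fun _ ↦ μ := by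
  have hbdd : ∀ k j y, |g k (x j) - g k y| ≤ B + B := fun k j y ↦
    (abs_sub _ _).trans (add_le_add (hB k _) (hB k y))
  have hint : ∀ k j, Integrable (fun x' : ι → Ω ↦ g k (x j) - g k (x' j))
      (Measure.pi fun _ ↦ μ) := fun k j ↦
    .of_bound (Continuous.aestronglyMeasurable (by have := hg k; fun_prop)) (B + B)
      (.of_forall fun x' ↦ hbdd k j (x' j))
  have hmean : ∀ k j, ∫ x' : ι → Ω, (g k (x j) - g k (x' j)) ∂Measure.pi (fun _ ↦ μ) =
      g k (x j) - ∫ y, g k y ∂μ := fun k j ↦ by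
    rw [integral_comp_eval (μ := fun _ : ι ↦ μ) (f := fun y ↦ g k (x j) - g k y)
      (Continuous.aestronglyMeasurable (by have := hg k; fun_prop)),
      integral_sub (integrable_const _)
      (.of_bound (hg k).aestronglyMeasurable B (.of_forall (hB k)))]
    simp
  refine Real.iSup_le (fun k ↦ ?_) (integral_nonneg fun _ ↦ Real.iSup_nonneg fun _ ↦ abs_nonneg _)
  calc |∑ j, (g k (x j) - ∫ y, g k y ∂μ)|
      = |∫ x' : ι → Ω, ∑ j, (g k (x j) - g k (x' j)) ∂Measure.pi fun _ ↦ μ| := by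
        rw [integral_finsetSum _ fun j _ ↦ hint k j]
        simp only [hmean]
    _ ≤ ∫ x' : ι → Ω, |∑ j, (g k (x j) - g k (x' j))| ∂Measure.pi fun _ ↦ μ :=
        abs_integral_le_integral_abs
    _ ≤ _ := integral_mono (integrable_finsetSum _ fun j _ ↦ hint k j).abs
        (integrable_iSup_abs_sum (fun k j ↦ by have := hg k; fun_prop)
          fun k j x' ↦ hbdd k j (x' j))
        fun x' ↦ le_ciSup (bddAbove_range_abs_sum fun k j ↦ hbdd k j (x' j)) k

lemma integral_iSup_abs_sum_sub_integral_le_prod (hg : ∀ k, Continuous (g k))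
    (hB : ∀ k y, |g k y| ≤ B) :
    ∫ x : ι → Ω, ⨆ k, |∑ j, (g k (x j) - ∫ y, g k y ∂μ)| ∂Measure.pi (fun _ ↦ μ) ≤
      ∫ z : ι → Ω × Ω, ⨆ k, |∑ j, (g k (z j).1 - g k (z j).2)|
        ∂Measure.pi (fun _ ↦ μ.prod μ) := by
  let D : (ι → Ω) × (ι → Ω) → ℝ := fun w ↦ ⨆ k, |∑ j, (g k (w.1 j) - g k (w.2 j))|
  have hD : Integrable D ((Measure.pi fun _ ↦ μ).prod (Measure.pi fun _ ↦ μ)) :=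
    integrable_iSup_abs_sum (Z := (ι → Ω) × (ι → Ω)) (B := B + B)
      (F := fun k j w ↦ g k (w.1 j) - g k (w.2 j)) (fun k j ↦ by have := hg k; fun_prop)
      fun k j w ↦ (abs_sub _ _).trans (add_le_add (hB k _) (hB k _))
  calc ∫ x : ι → Ω, ⨆ k, |∑ j, (g k (x j) - ∫ y, g k y ∂μ)| ∂Measure.pi (fun _ ↦ μ)
      ≤ ∫ x, ∫ x', D (x, x') ∂Measure.pi (fun _ ↦ μ) ∂Measure.pi (fun _ ↦ μ) :=
        integral_mono_of_nonneg (.of_forall fun _ ↦ Real.iSup_nonneg fun _ ↦ abs_nonneg _)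
          hD.integral_prod_left (.of_forall (iSup_abs_sum_sub_integral_le hg hB))
    _ = ∫ w, D w ∂(Measure.pi fun _ ↦ μ).prod (Measure.pi fun _ ↦ μ) := (integral_prod D hD).symm
    _ = _ := ((measurePreserving_arrowProdEquivProdArrow Ω Ω ι (fun _ ↦ μ)
        fun _ ↦ μ).integral_comp' D).symm

lemma integral_iSup_abs_sum_sub_le_two_mul (hg : ∀ k, Continuous (g k))
    (hB : ∀ k y, |g k y| ≤ B) (ε : ι → ℤˣ) :
    ∫ z : ι → Ω × Ω, ⨆ k, |∑ j, (g k (z j).1 - g k (z j).2)| ∂Measure.pi (fun _ ↦ μ.prod μ) ≤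
      2 * ∫ x : ι → Ω, ⨆ k, |∑ j, ε j • g k (x j)| ∂Measure.pi (fun _ ↦ μ) := by
  let S : (ι → Ω) → ℝ := fun x ↦ ⨆ k, |∑ j, ε j • g k (x j)|
  have hbdd : ∀ k j y, |ε j • g k y| ≤ B := fun k j y ↦ by
    rw [abs_intUnits_smul]
    exact hB k y
  have hS : Integrable S (Measure.pi fun _ ↦ μ) :=
    integrable_iSup_abs_sum (fun k j ↦ by have := hg k; fun_prop) fun k j x ↦ hbdd k j (x j)
  have hint : ∀ {π : Ω × Ω → Ω}, MeasurePreserving π (μ.prod μ) μ →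
      Integrable (fun z : ι → Ω × Ω ↦ S fun j ↦ π (z j)) (Measure.pi fun _ ↦ μ.prod μ) := fun hπ ↦
    (measurePreserving_pi _ _ fun _ ↦ hπ).integrable_comp_of_integrable hS
  have hswap : ∀ (z : ι → Ω × Ω) k j, g k (if ε j = 1 then z j else (z j).swap).1 -
      g k (if ε j = 1 then z j else (z j).swap).2 = ε j • (g k (z j).1 - g k (z j).2) := by
    intro z k j
    rcases Int.units_eq_one_or (ε j) with h | h <;> simp [h, Units.smul_def]
  have hle : ∀ z : ι → Ω × Ω, ⨆ k, |∑ j, ε j • (g k (z j).1 - g k (z j).2)| ≤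
      S (fun j ↦ (z j).1) + S (fun j ↦ (z j).2) := fun z ↦ by
    refine Real.iSup_le (fun k ↦ ?_) (add_nonneg (Real.iSup_nonneg fun _ ↦ abs_nonneg _)
      (Real.iSup_nonneg fun _ ↦ abs_nonneg _))
    simp only [smul_sub, Finset.sum_sub_distrib]
    exact (abs_sub _ _).trans (add_le_add
      (le_ciSup (bddAbove_range_abs_sum fun k j ↦ hbdd k j (z j).1) k)
      (le_ciSup (bddAbove_range_abs_sum fun k j ↦ hbdd k j (z j).2) k))
  calc ∫ z : ι → Ω × Ω, ⨆ k, |∑ j, (g k (z j).1 - g k (z j).2)| ∂Measure.pi (fun _ ↦ μ.prod μ)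
      = ∫ z : ι → Ω × Ω, ⨆ k, |∑ j, ε j • (g k (z j).1 - g k (z j).2)|
          ∂Measure.pi (fun _ ↦ μ.prod μ) := by
        rw [← integral_pi_prod_swap μ ε]
        simp only [hswap]
    _ ≤ ∫ z, (S (fun j ↦ (z j).1) + S (fun j ↦ (z j).2)) ∂Measure.pi (fun _ ↦ μ.prod μ) :=
        integral_mono_of_nonneg (.of_forall fun _ ↦ Real.iSup_nonneg fun _ ↦ abs_nonneg _)
          ((hint measurePreserving_fst).add (hint measurePreserving_snd)) (.of_forall hle)
    _ = 2 * ∫ x, S x ∂Measure.pi (fun _ ↦ μ) := by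
        rw [integral_add (hint measurePreserving_fst) (hint measurePreserving_snd),
          integral_pi_comp measurePreserving_fst hS.1,
          integral_pi_comp measurePreserving_snd hS.1, two_mul]

theorem integral_iSup_abs_sum_sub_integral_le_rademacherAverage [DecidableEq ι]
    (hg : ∀ k, Continuous (g k)) (hB : ∀ k y, |g k y| ≤ B) :
    ∫ x : ι → Ω, ⨆ k, |∑ j, (g k (x j) - ∫ y, g k y ∂μ)| ∂Measure.pi (fun _ ↦ μ) ≤
      2 * ∫ x : ι → Ω, rademacherAverage (fun k j ↦ g k (x j)) ∂Measure.pi (fun _ ↦ μ) := by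
  have hint : ∀ ε : ι → ℤˣ, Integrable (fun x : ι → Ω ↦ ⨆ k, |∑ j, ε j • g k (x j)|)
      (Measure.pi fun _ ↦ μ) := fun ε ↦
    integrable_iSup_abs_sum (B := B) (fun k j ↦ by have := hg k; fun_prop) fun k j x ↦ by
      rw [abs_intUnits_smul]
      exact hB k _
  have hexp : ∫ x : ι → Ω, rademacherAverage (fun k j ↦ g k (x j)) ∂Measure.pi (fun _ ↦ μ) =
      𝔼 ε : ι → ℤˣ, ∫ x : ι → Ω, ⨆ k, |∑ j, ε j • g k (x j)| ∂Measure.pi (fun _ ↦ μ) := by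
    simp only [rademacherAverage, Fintype.expect_eq_sum_div_card, integral_div,
      integral_finsetSum _ fun ε _ ↦ hint ε]
  rw [hexp, Finset.mul_expect]
  exact (integral_iSup_abs_sum_sub_integral_le_prod hg hB).trans <|
    Finset.le_expect Finset.univ_nonempty fun ε _ ↦ integral_iSup_abs_sum_sub_le_two_mul hg hB ε

end Symmetrization

section EntropyNumbers

variable {V Z Ω : Type*} {dd dd' : V → V → ℝ} {F : Set V} {n : ℕ} {B δ ε : ℝ}

lemma entropyNumD_nonneg (dd : V → V → ℝ) (F : Set V) (n : ℕ) : 0 ≤ entropyNumD dd F n :=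
  Real.sInf_nonneg fun _ hε ↦ hε.1.le

lemma nonempty_setOf_covering_radius (hF : F.Nonempty) (hB : ∀ f ∈ F, ∀ g ∈ F, dd f g ≤ B) (n : ℕ) :
    {ε : ℝ | 0 < ε ∧ ∃ T : Finset V, ↑T ⊆ F ∧ T.card ≤ (if n = 0 then 1 else 2 ^ 2 ^ n) ∧
      ∀ f ∈ F, ∃ g ∈ T, dd f g < ε}.Nonempty := by
  obtain ⟨f₀, hf₀⟩ := hF
  refine ⟨max B 0 + 1, by positivity, {f₀}, by simpa using hf₀, ?_, fun f hf ↦ ⟨f₀, by simp, ?_⟩⟩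
  · rw [Finset.card_singleton]
    split_ifs
    exacts [le_rfl, Nat.one_le_two_pow]
  · linarith [hB f hf f₀ hf₀, le_max_left B 0]

lemma exists_finset_of_entropyNumD_lt (hF : F.Nonempty) (hB : ∀ f ∈ F, ∀ g ∈ F, dd f g ≤ B)
    (hε : entropyNumD dd F n < ε) :
    ∃ T : Finset F, T.card ≤ (if n = 0 then 1 else 2 ^ 2 ^ n) ∧ ∀ f : F, ∃ g ∈ T, dd f g < ε := by
  classical
  obtain ⟨ε', ⟨-, T, hTF, hcard, hT⟩, hε'⟩ :=
    exists_lt_of_csInf_lt (nonempty_setOf_covering_radius hF hB n) hε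
  refine ⟨T.subtype (· ∈ F), ?_, fun f ↦ ?_⟩
  · exact (Finset.card_subtype _ _).trans_le ((Finset.card_filter_le _ _).trans hcard)
  · obtain ⟨g, hg, hfg⟩ := hT f f.2
    exact ⟨⟨g, hTF hg⟩, Finset.mem_subtype.2 hg, hfg.trans hε'⟩

lemma entropyNumD_le_add (hF : F.Nonempty) (hB : ∀ f ∈ F, ∀ g ∈ F, dd f g ≤ B) (hδ : 0 ≤ δ)
    (h : ∀ f ∈ F, ∀ g ∈ F, dd' f g ≤ dd f g + δ) (n : ℕ) :
    entropyNumD dd' F n ≤ entropyNumD dd F n + δ := by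
  refine sub_le_iff_le_add.1 (le_csInf (nonempty_setOf_covering_radius hF hB n) ?_)
  rintro ε ⟨hε, T, hTF, hcard, hT⟩
  refine sub_le_iff_le_add.2 (csInf_le ⟨0, fun _ hε' ↦ hε'.1.le⟩
    ⟨by positivity, T, hTF, hcard, fun f hf ↦ ?_⟩)
  obtain ⟨g, hg, hfg⟩ := hT f hf
  exact ⟨g, hg, (h f hf g (hTF hg)).trans_lt (by gcongr)⟩

lemma continuous_entropyNumD [TopologicalSpace Z] {dd : Z → V → V → ℝ} (hF : F.Nonempty)
    (hB : ∀ z, ∀ f ∈ F, ∀ g ∈ F, dd z f g ≤ B)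
    (h : ∀ z₀, ∀ δ > 0, ∀ᶠ z in nhds z₀, ∀ f ∈ F, ∀ g ∈ F, |dd z f g - dd z₀ f g| ≤ δ) (n : ℕ) :
    Continuous fun z ↦ entropyNumD (dd z) F n := by
  refine continuous_iff_continuousAt.2 fun z₀ ↦ Metric.tendsto_nhds.2 fun δ hδ ↦ ?_
  filter_upwards [h z₀ (δ / 2) (half_pos hδ)] with z hz
  have hle := entropyNumD_le_add (dd' := dd z) hF (hB z₀) (half_pos hδ).le
    (fun f hf g hg ↦ by linarith [(abs_le.1 (hz f hf g hg)).2]) n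
  have hge := entropyNumD_le_add (dd' := dd z₀) hF (hB z) (half_pos hδ).le
    (fun f hf g hg ↦ by linarith [(abs_le.1 (hz f hf g hg)).1]) n
  rw [Real.dist_eq, abs_lt]
  constructor <;> linarith

variable {m : ℕ}

lemma iSup_abs_sub_eq_dist (x : Fin m → Ω) (f g : Ω → ℝ) :
    ⨆ j, |f (x j) - g (x j)| = dist (f ∘ x) (g ∘ x) := by
  refine le_antisymm (Real.iSup_le (fun j ↦ dist_le_pi_dist (f ∘ x) (g ∘ x) j) dist_nonneg)
    ((dist_pi_le_iff (Real.iSup_nonneg fun _ ↦ abs_nonneg _)).2 fun j ↦ ?_)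
  exact le_ciSup (f := fun j ↦ |f (x j) - g (x j)|) (Set.finite_range _).bddAbove j

lemma iSup_abs_sub_le {F : Set (Ω → ℝ)} (hB : ∀ f ∈ F, ∀ y, |f y| ≤ B) (x : Fin m → Ω) :
    ∀ f ∈ F, ∀ g ∈ F, ⨆ j, |f (x j) - g (x j)| ≤ |B| + |B| := fun f hf g hg ↦
  Real.iSup_le (fun j ↦ (abs_sub _ _).trans <| add_le_add ((hB f hf _).trans (le_abs_self B))
    ((hB g hg _).trans (le_abs_self B))) (by positivity)

lemma continuous_entropyNumD_sample [TopologicalSpace Ω] {F : Set (Ω → ℝ)} (hF : F.Nonempty)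
    (hB : ∀ f ∈ F, ∀ y, |f y| ≤ B) (hequi : F.Equicontinuous) (n : ℕ) :
    Continuous fun x : Fin m → Ω ↦ entropyNumD
      (fun f g : Ω → ℝ ↦ ⨆ j, |f (x j) - g (x j)|) F n := by
  refine continuous_entropyNumD hF (iSup_abs_sub_le hB) (fun x₀ δ hδ ↦ ?_) n
  have hclose : ∀ᶠ x in nhds x₀, ∀ j, ∀ f : F,
      dist ((f : Ω → ℝ) (x₀ j)) ((f : Ω → ℝ) (x j)) < δ / 2 :=
    Filter.eventually_all.2 fun j ↦ ((continuous_apply j).tendsto x₀).eventually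
      (Metric.equicontinuousAt_iff_right.1 (hequi (x₀ j)) _ (half_pos hδ))
  filter_upwards [hclose] with x hx f hf g hg
  have hdist : ∀ f ∈ F, dist (f ∘ x) (f ∘ x₀) ≤ δ / 2 := fun f hf ↦
    (dist_pi_le_iff (half_pos hδ).le).2 fun j ↦ dist_comm (f (x j)) _ ▸ (hx j ⟨f, hf⟩).le
  rw [iSup_abs_sub_eq_dist, iSup_abs_sub_eq_dist, ← Real.dist_eq]
  exact (dist_dist_dist_le _ _ _ _).trans ((add_le_add (hdist f hf) (hdist g hg)).trans
    (add_halves δ).le)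

lemma equicontinuous_of_finiteDimensional [TopologicalSpace Ω] [CompactSpace Ω]
    {X : Submodule ℝ (Ω → ℝ)} [FiniteDimensional ℝ X] (hX : ∀ f ∈ X, Continuous f)
    {F : Set (Ω → ℝ)} (hFX : F ⊆ X) (hB : ∀ f ∈ F, ∀ y, |f y| ≤ B) : F.Equicontinuous := by
  let X' : Submodule ℝ C(Ω, ℝ) := X.comap (ContinuousMap.coeFnLinearMap ℝ)
  have : FiniteDimensional ℝ X' := Module.Finite.of_injective
    ((ContinuousMap.coeFnLinearMap ℝ).restrict fun _ hf ↦ hf : X' →ₗ[ℝ] X)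
    fun _ _ h ↦ Subtype.ext (DFunLike.coe_injective (congrArg Subtype.val h))
  have : ProperSpace X' := FiniteDimensional.proper ℝ X'
  refine fun y₀ ↦ Metric.equicontinuousAt_iff_right.2 fun δ hδ ↦ ?_
  have hcont : Continuous fun z : Ω × X' ↦ dist ((z.2 : C(Ω, ℝ)) y₀) ((z.2 : C(Ω, ℝ)) z.1) := by
    fun_prop
  have hball := (isCompact_closedBall (0 : X') |B|).eventually_forall_of_forall_eventually
    (x₀ := y₀) (P := fun y f ↦ dist ((f : C(Ω, ℝ)) y₀) ((f : C(Ω, ℝ)) y) < δ) fun f _ ↦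
      hcont.continuousAt.eventually_lt continuousAt_const (by simpa using hδ)
  filter_upwards [hball] with y hy f
  refine hy ⟨⟨f, hX f (hFX f.2)⟩, hFX f.2⟩ (mem_closedBall_zero_iff.2 ?_)
  exact (ContinuousMap.norm_le _ (abs_nonneg B)).2 fun z ↦ (hB f f.2 z).trans (le_abs_self B)

end EntropyNumbers

section UnitBalls

variable {Ω : Type*} [TopologicalSpace Ω] [CompactSpace Ω]

lemma abs_le_supNorm {f : Ω → ℝ} (hf : Continuous f) (y : Ω) : |f y| ≤ supNorm f :=
  le_ciSup (f := fun y ↦ |f y|) (isCompact_range hf.abs).bddAbove y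

variable [MeasurableSpace Ω] [BorelSpace Ω] {μ : Measure Ω} {f : Ω → ℝ}

lemma integrable_of_continuous [IsFiniteMeasure μ] (hf : Continuous f) : Integrable f μ :=
  hf.integrable_of_hasCompactSupport (.of_compactSpace f)

lemma abs_rpow_le_sq_mul_integral [IsFiniteMeasure μ] (hf : Continuous f) {H r : ℝ} (hr : 0 < r)
    (hr₂ : r ≤ 2) (hNI : supNorm f ≤ H * √(∫ y, f y ^ 2 ∂μ)) (y : Ω) :
    |f y| ^ r ≤ H ^ 2 * ∫ z, |f z| ^ r ∂μ := by
  set s := supNorm f with hsup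
  have hs : 0 ≤ s := (abs_nonneg _).trans (abs_le_supNorm hf y)
  refine (Real.rpow_le_rpow (abs_nonneg _) (abs_le_supNorm hf y) hr.le).trans ?_
  rcases hs.eq_or_lt with hs | hs
  · rw [← hsup, ← hs, Real.zero_rpow hr.ne']
    exact mul_nonneg (sq_nonneg H) (integral_nonneg fun z ↦ by positivity)
  have hpow : ∀ {t : ℝ}, 0 < t → t ^ 2 = t ^ (2 - r) * t ^ r := fun {t} ht ↦ by
    rw [← Real.rpow_add ht, sub_add_cancel, Real.rpow_two]
  have hsq : ∫ z, f z ^ 2 ∂μ ≤ s ^ (2 - r) * ∫ z, |f z| ^ r ∂μ := by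
    rw [← integral_const_mul]
    refine integral_mono (integrable_of_continuous (hf.pow 2)) (integrable_of_continuous
      (continuous_const.mul (hf.abs.rpow_const fun _ ↦ .inr hr.le))) fun z ↦ ?_
    change f z ^ 2 ≤ s ^ (2 - r) * |f z| ^ r
    rcases (abs_nonneg (f z)).eq_or_lt with hz | hz
    · rw [← sq_abs, ← hz, Real.zero_rpow hr.ne', mul_zero, zero_pow two_ne_zero]
    · rw [← sq_abs, hpow hz]
      gcongr
      exact abs_le_supNorm hf z
  refine le_of_mul_le_mul_left ?_ (Real.rpow_pos_of_pos hs (2 - r))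
  calc s ^ (2 - r) * s ^ r = s ^ 2 := (hpow hs).symm
    _ ≤ (H * √(∫ y, f y ^ 2 ∂μ)) ^ 2 := by gcongr
    _ = H ^ 2 * ∫ z, f z ^ 2 ∂μ := by
      rw [mul_pow, Real.sq_sqrt (integral_nonneg fun z ↦ sq_nonneg _)]
    _ ≤ H ^ 2 * (s ^ (2 - r) * ∫ z, |f z| ^ r ∂μ) := by gcongr
    _ = s ^ (2 - r) * (H ^ 2 * ∫ z, |f z| ^ r ∂μ) := by ring

lemma rpow_mul_rpow_rpow {K H r : ℝ} (hK : 0 ≤ K) (hH : 0 ≤ H) (hr : 0 < r) :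
    (K ^ (1 / r) * H ^ (2 / r)) ^ r = K * H ^ 2 := by
  rw [Real.mul_rpow (by positivity) (by positivity), ← Real.rpow_mul hK, ← Real.rpow_mul hH,
    div_mul_cancel₀ _ hr.ne', div_mul_cancel₀ _ hr.ne', Real.rpow_one, Real.rpow_two]

lemma abs_le_of_integral_rpow_le [IsFiniteMeasure μ] (hf : Continuous f) {K H r : ℝ} (hr : 0 < r)
    (hr₂ : r ≤ 2) (hH : 0 ≤ H) (hNI : supNorm f ≤ H * √(∫ y, f y ^ 2 ∂μ))
    (hK : ∫ z, |f z| ^ r ∂μ ≤ K) (y : Ω) : |f y| ≤ K ^ (1 / r) * H ^ (2 / r) := by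
  have hK₀ : 0 ≤ K := (integral_nonneg fun z ↦ by positivity).trans hK
  rw [← Real.rpow_le_rpow_iff (abs_nonneg _) (by positivity) hr, rpow_mul_rpow_rpow hK₀ hH hr]
  calc |f y| ^ r ≤ H ^ 2 * ∫ z, |f z| ^ r ∂μ := abs_rpow_le_sq_mul_integral hf hr hr₂ hNI y
    _ ≤ H ^ 2 * K := by gcongr
    _ = K * H ^ 2 := mul_comm _ _

namespace IsPhiPrefun

variable {Φ : ℝ → ℝ} {q r a : ℝ}

lemma luxNorm_zero_lt_one {Ω : Type*} [MeasurableSpace Ω] {μ : Measure Ω} (hΦ : IsPhiPrefun Φ) :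
    luxNorm μ Φ 0 < 1 :=
  (csInf_le ⟨0, fun _ hl ↦ hl.1.le⟩ (show (1 / 2 : ℝ) ∈ _ by
    constructor <;> simp [hΦ.map_zero])).trans_lt one_half_lt_one

lemma rpow_le_one_add_mul (hΦ : IsPhiPrefun Φ) (hd : DecQ Φ q) (hi : AIncP Φ r a) (ha : 0 ≤ a)
    (hr : 0 < r) {t : ℝ} (ht : 0 ≤ t) : t ^ r ≤ 1 + a / Φ 1 * Φ t := by
  have hΦ₁ : 0 < Φ 1 := hΦ.pos hd one_pos
  have hΦt : 0 ≤ a / Φ 1 * Φ t := mul_nonneg (by positivity) (hΦ.nonneg t ht)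
  rcases le_or_gt t 1 with h1 | h1
  · exact (Real.rpow_le_one ht h1 hr.le).trans (le_add_of_nonneg_right hΦt)
  · have h := hi 1 t one_pos h1
    rw [Real.one_rpow, div_one, ← mul_div_assoc, le_div_iff₀ (by positivity)] at h
    have : t ^ r ≤ a / Φ 1 * Φ t := by
      rwa [div_mul_eq_mul_div, le_div_iff₀ hΦ₁, mul_comm]
    linarith

lemma continuous_comp_abs {Ω : Type*} [TopologicalSpace Ω] {f : Ω → ℝ} (hΦ : IsPhiPrefun Φ)
    (hd : DecQ Φ q) (hq : 1 ≤ q) (hf : Continuous f) : Continuous fun y ↦ Φ |f y| :=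
  (hΦ.continuousOn hd hq).comp_continuous hf.abs fun y ↦ Set.mem_Ici.2 (abs_nonneg (f y))

variable [IsProbabilityMeasure μ]

omit [BorelSpace Ω] in
lemma exists_integral_div_le_one_of_luxNorm_lt_one (hΦ : IsPhiPrefun Φ) (hf : Continuous f)
    (hlux : luxNorm μ Φ f < 1) :
    ∃ l > 0, l < 1 ∧ ∫ y, Φ |f y / l| ∂μ ≤ 1 := by
  obtain ⟨t, hΦt, ht : 0 < t⟩ :=
    ((hΦ.tendsto_zero.eventually_lt_const one_pos).and self_mem_nhdsWithin).exists
  obtain ⟨C, hC, hfC⟩ := (isCompact_range hf).isBounded.exists_pos_norm_le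
  have hfin : ∫ y, Φ (|f y| / (C / t)) ∂μ ≤ 1 := by
    refine (integral_mono_of_nonneg (.of_forall fun y ↦ hΦ.nonneg _ (by positivity))
      (integrable_const 1) (.of_forall fun y ↦ ?_)).trans (by simp)
    have hy : |f y| / (C / t) ≤ t := by
      rw [div_le_iff₀ (by positivity), mul_div_cancel₀ _ ht.ne']
      exact hfC _ ⟨y, rfl⟩
    exact (hΦ.mono (Set.mem_Ici.2 (by positivity)) ht.le hy).trans hΦt.le
  have hne : {l : ℝ | 0 < l ∧ ∫ y, Φ (|f y| / l) ∂μ ≤ 1}.Nonempty := ⟨C / t, by positivity, hfin⟩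
  obtain ⟨l, ⟨hl, hint⟩, hl₁⟩ := exists_lt_of_csInf_lt hne hlux
  exact ⟨l, hl, hl₁, by simpa only [abs_div, abs_of_pos hl] using hint⟩

lemma integral_le_one_of_luxNorm_lt_one (hΦ : IsPhiPrefun Φ) (hd : DecQ Φ q) (hq : 1 ≤ q)
    (hf : Continuous f) (hlux : luxNorm μ Φ f < 1) : ∫ y, Φ |f y| ∂μ ≤ 1 := by
  obtain ⟨l, hl, hl₁, hint⟩ := hΦ.exists_integral_div_le_one_of_luxNorm_lt_one hf hlux
  refine (integral_mono_of_nonneg (.of_forall fun y ↦ hΦ.nonneg _ (abs_nonneg _))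
    (integrable_of_continuous (hΦ.continuous_comp_abs hd hq (hf.div_const l)))
    (.of_forall fun y ↦ hΦ.mono (Set.mem_Ici.2 (abs_nonneg _))
      (Set.mem_Ici.2 (abs_nonneg _)) ?_)).trans hint
  rw [abs_div, abs_of_pos hl]
  exact le_div_self (abs_nonneg _) hl hl₁.le

lemma integral_rpow_lt_of_luxNorm_lt_one (hΦ : IsPhiPrefun Φ) (hd : DecQ Φ q) (hq : 1 ≤ q)
    (hi : AIncP Φ r a) (ha : 0 ≤ a) (hr : 0 < r) (hf : Continuous f) (hlux : luxNorm μ Φ f < 1) :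
    ∫ y, |f y| ^ r ∂μ < 1 + a / Φ 1 := by
  have hΦ₁ : 0 < Φ 1 := hΦ.pos hd one_pos
  obtain ⟨l, hl, hl₁, hint⟩ := hΦ.exists_integral_div_le_one_of_luxNorm_lt_one hf hlux
  have hΦf : Integrable (fun y ↦ Φ |f y / l|) μ :=
    integrable_of_continuous (hΦ.continuous_comp_abs hd hq (hf.div_const l))
  have hscaled : ∫ y, |f y / l| ^ r ∂μ ≤ 1 + a / Φ 1 := calc
    ∫ y, |f y / l| ^ r ∂μ ≤ ∫ y, (1 + a / Φ 1 * Φ |f y / l|) ∂μ :=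
      integral_mono_of_nonneg (.of_forall fun y ↦ by positivity)
        ((integrable_const 1).add (hΦf.const_mul _))
        (.of_forall fun y ↦ hΦ.rpow_le_one_add_mul hd hi ha hr (abs_nonneg _))
    _ = 1 + a / Φ 1 * ∫ y, Φ |f y / l| ∂μ := by
      rw [integral_add (integrable_const 1) (hΦf.const_mul _), integral_const_mul]
      simp
    _ ≤ 1 + a / Φ 1 := by
      gcongr
      exact mul_le_of_le_one_right (by positivity) hint
  calc ∫ y, |f y| ^ r ∂μ = l ^ r * ∫ y, |f y / l| ^ r ∂μ := by
        simp_rw [abs_div, abs_of_pos hl, Real.div_rpow (abs_nonneg _) hl.le, integral_div]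
        field_simp
    _ ≤ l ^ r * (1 + a / Φ 1) := by gcongr
    _ < 1 + a / Φ 1 := mul_lt_of_lt_one_left (by positivity) (Real.rpow_lt_one hl.le hl₁ hr)

end IsPhiPrefun

end UnitBalls

section OrliczBall

variable {Ω : Type*} [MeasurableSpace Ω]

/-- The open unit ball `X^Φ` of a space `X` of functions with respect to the Luxemburg functional
of `Φ`. -/
def orliczBall (μ : Measure Ω) (Φ : ℝ → ℝ) (X : Submodule ℝ (Ω → ℝ)) : Set (Ω → ℝ) :=
  {f | f ∈ X ∧ luxNorm μ Φ f < 1}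

/-- The open unit ball `X^r` of a space `X` of functions with respect to the `L^r(μ)` norm. -/
def lpBall (μ : Measure Ω) (r : ℝ) (X : Submodule ℝ (Ω → ℝ)) : Set (Ω → ℝ) :=
  {f | f ∈ X ∧ (∫ y, |f y| ^ r ∂μ) ^ (1 / r) < 1}

/-- The constant `R_Φ(r)` built from the constant `a` of `(aInc)_r`: the Orlicz unit ball of `Φ`
lies in the `L^r` ball of this radius. -/
noncomputable def embeddingConst (Φ : ℝ → ℝ) (a r : ℝ) : ℝ := (1 + a / Φ 1) ^ (1 / r)

/-- The restriction map `f ↦ (f (x₁), …, f (x_m))` from a space of functions to `ℝ^m`, which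
carries the maximum norm. -/
def sampling {m : ℕ} (X : Submodule ℝ (Ω → ℝ)) (x : Fin m → Ω) : X →ₗ[ℝ] Fin m → ℝ :=
  LinearMap.funLeft ℝ ℝ x ∘ₗ X.subtype

/-- The sum `∑ 2^{n/2} e_n(X^r, ‖·‖_{∞,x})^{r/2}` over the levels `n ≤ log₂ (dim X)`, where
`e_n(X^r, ‖·‖_{∞,x})` are the entropy numbers of the `L^r` ball in the sampled maximum norm. -/
noncomputable def entropySum {m : ℕ} (μ : Measure Ω) (r : ℝ) (X : Submodule ℝ (Ω → ℝ))
    (x : Fin m → Ω) : ℝ :=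
  ∑ n ∈ Finset.range (Nat.log 2 (Module.finrank ℝ X) + 1), (2 : ℝ) ^ ((n : ℝ) / 2) *
    entropyNumD (fun f g : Ω → ℝ ↦ ⨆ j, |f (x j) - g (x j)|) (lpBall μ r X) n ^ (r / 2)

variable {μ : Measure Ω} {Φ : ℝ → ℝ} {X : Submodule ℝ (Ω → ℝ)} {q r a H : ℝ} {m : ℕ}

lemma zero_mem_lpBall (hr : 0 < r) : 0 ∈ lpBall μ r X := by
  refine ⟨X.zero_mem, ?_⟩
  simp [Real.zero_rpow hr.ne', Real.zero_rpow (inv_pos.2 hr).ne']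

namespace IsPhiPrefun

lemma zero_mem_orliczBall (hΦ : IsPhiPrefun Φ) : 0 ∈ orliczBall μ Φ X :=
  ⟨X.zero_mem, hΦ.luxNorm_zero_lt_one⟩

lemma one_add_div_pos (hΦ : IsPhiPrefun Φ) (ha : 0 ≤ a) : 0 < 1 + a / Φ 1 := by
  have := hΦ.nonneg 1 zero_le_one
  positivity

lemma embeddingConst_pos (hΦ : IsPhiPrefun Φ) (ha : 0 ≤ a) : 0 < embeddingConst Φ a r :=
  Real.rpow_pos_of_pos (hΦ.one_add_div_pos ha) _

lemma embeddingConst_rpow (hΦ : IsPhiPrefun Φ) (ha : 0 ≤ a) (hr : 0 < r) :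
    embeddingConst Φ a r ^ r = 1 + a / Φ 1 := by
  rw [embeddingConst, one_div, Real.rpow_inv_rpow (hΦ.one_add_div_pos ha).le hr.ne']

variable [TopologicalSpace Ω] [CompactSpace Ω] [BorelSpace Ω] [IsProbabilityMeasure μ]

lemma inv_smul_mem_lpBall (hΦ : IsPhiPrefun Φ) (hd : DecQ Φ q) (hq : 1 ≤ q) (hi : AIncP Φ r a)
    (ha : 0 ≤ a) (hr : 0 < r) (hX : ∀ f ∈ X, Continuous f) {f : Ω → ℝ}
    (hf : f ∈ orliczBall μ Φ X) : (embeddingConst Φ a r)⁻¹ • f ∈ lpBall μ r X := by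
  have hR := hΦ.embeddingConst_pos (r := r) ha
  refine ⟨X.smul_mem _ hf.1, Real.rpow_lt_one (integral_nonneg fun _ ↦ by positivity) ?_
    (by positivity)⟩
  simp_rw [Pi.smul_apply, smul_eq_mul, abs_mul, abs_of_pos (inv_pos.2 hR),
    Real.mul_rpow (inv_pos.2 hR).le (abs_nonneg _), Real.inv_rpow hR.le, integral_const_mul,
    hΦ.embeddingConst_rpow ha hr]
  rw [inv_mul_lt_iff₀ (hΦ.one_add_div_pos ha), mul_one]
  exact hΦ.integral_rpow_lt_of_luxNorm_lt_one hd hq hi ha hr (hX f hf.1) hf.2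

lemma abs_le_of_mem_orliczBall (hΦ : IsPhiPrefun Φ) (hd : DecQ Φ q) (hq : 1 ≤ q)
    (hi : AIncP Φ r a) (ha : 0 ≤ a) (hr : 0 < r) (hr₂ : r ≤ 2) (hH : 0 ≤ H)
    (hX : ∀ f ∈ X, Continuous f) (hNI : ∀ f ∈ X, supNorm f ≤ H * √(∫ y, f y ^ 2 ∂μ)) {f : Ω → ℝ}
    (hf : f ∈ orliczBall μ Φ X) (y : Ω) : |f y| ≤ embeddingConst Φ a r * H ^ (2 / r) :=
  abs_le_of_integral_rpow_le (hX f hf.1) hr hr₂ hH (hNI f hf.1)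
    (hΦ.integral_rpow_lt_of_luxNorm_lt_one hd hq hi ha hr (hX f hf.1) hf.2).le y

lemma abs_comp_le_of_mem_orliczBall (hΦ : IsPhiPrefun Φ) (hd : DecQ Φ q) (hq : 1 ≤ q)
    (hi : AIncP Φ r a) (ha : 0 ≤ a) (hr : 0 < r) (hr₂ : r ≤ 2) (hH : 0 ≤ H)
    (hX : ∀ f ∈ X, Continuous f) (hNI : ∀ f ∈ X, supNorm f ≤ H * √(∫ y, f y ^ 2 ∂μ)) {f : Ω → ℝ}
    (hf : f ∈ orliczBall μ Φ X) (y : Ω) :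
    |Φ (|f y|)| ≤ Φ (embeddingConst Φ a r * H ^ (2 / r)) := by
  have hfy := hΦ.abs_le_of_mem_orliczBall hd hq hi ha hr hr₂ hH hX hNI hf y
  rw [abs_of_nonneg (hΦ.nonneg _ (abs_nonneg _))]
  exact hΦ.mono (Set.mem_Ici.2 (abs_nonneg _)) (Set.mem_Ici.2 ((abs_nonneg _).trans hfy)) hfy

end IsPhiPrefun

variable [TopologicalSpace Ω] [CompactSpace Ω] [BorelSpace Ω]

lemma abs_le_of_mem_lpBall [IsFiniteMeasure μ] (hr : 0 < r) (hr₂ : r ≤ 2) (hH : 0 ≤ H)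
    (hX : ∀ f ∈ X, Continuous f) (hNI : ∀ f ∈ X, supNorm f ≤ H * √(∫ y, f y ^ 2 ∂μ)) {f : Ω → ℝ}
    (hf : f ∈ lpBall μ r X) (y : Ω) : |f y| ≤ H ^ (2 / r) := by
  have hle : ∫ z, |f z| ^ r ∂μ ≤ 1 := by
    by_contra! hlt
    exact (Real.one_le_rpow hlt.le (by positivity)).not_gt hf.2
  simpa using abs_le_of_integral_rpow_le (hX f hf.1) hr hr₂ hH (hNI f hf.1) hle y

lemma continuous_entropySum [IsFiniteMeasure μ] [FiniteDimensional ℝ X] (hr : 0 < r) (hr₂ : r ≤ 2)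
    (hH : 0 ≤ H) (hX : ∀ f ∈ X, Continuous f)
    (hNI : ∀ f ∈ X, supNorm f ≤ H * √(∫ y, f y ^ 2 ∂μ)) :
    Continuous fun x : Fin m → Ω ↦ entropySum μ r X x := by
  have hB : ∀ f ∈ lpBall μ r X, ∀ y, |f y| ≤ H ^ (2 / r) := fun f ↦
    abs_le_of_mem_lpBall hr hr₂ hH hX hNI
  refine continuous_finsetSum _ fun n _ ↦ continuous_const.mul <|
    (continuous_entropyNumD_sample ⟨0, zero_mem_lpBall hr⟩ hB ?_ n).rpow_const
      fun _ ↦ .inr (by positivity)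
  exact equicontinuous_of_finiteDimensional hX (fun f hf ↦ hf.1) hB

lemma entropySum_nonneg {Ω : Type*} [MeasurableSpace Ω] {μ : Measure Ω}
    {X : Submodule ℝ (Ω → ℝ)} (x : Fin m → Ω) : 0 ≤ entropySum μ r X x :=
  Finset.sum_nonneg fun n _ ↦
    mul_nonneg (by positivity) (Real.rpow_nonneg (entropyNumD_nonneg _ _ n) _)

-- Nets exist only for radii strictly larger than the entropy numbers, whence the slack `η`.
lemma le_mul_sum_rpow_of_forall_pos_add {L C α : ℝ} {s : Finset ℕ} {w e : ℕ → ℝ} (hα : 0 ≤ α)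
    (h : ∀ η > 0, L ≤ C * ∑ n ∈ s, w n * (e n + η) ^ α) : L ≤ C * ∑ n ∈ s, w n * e n ^ α := by
  have hcont : Continuous fun η : ℝ ↦ C * ∑ n ∈ s, w n * (e n + η) ^ α :=
    continuous_const.mul <| continuous_finsetSum _ fun n _ ↦ continuous_const.mul <|
      (continuous_const.add continuous_id).rpow_const fun _ ↦ .inr hα
  have hlim := (hcont.tendsto 0).mono_left (nhdsWithin_le_nhds (s := Set.Ioi 0))
  simp only [add_zero] at hlim
  exact ge_of_tendsto hlim (Filter.eventually_of_mem self_mem_nhdsWithin h)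

end OrliczBall

section FixedSample

variable {Φ : ℝ → ℝ} {q r a H W : ℝ} {m : ℕ}

lemma IsPhiPrefun.sum_sq_sub_le {ι : Type*} [Fintype ι] (hΦ : IsPhiPrefun Φ) (hd : DecQ Φ q)
    (hq : 1 ≤ q) (hi : AIncP Φ r a) (ha : 1 ≤ a) (hr : 0 < r) (hr₂ : r ≤ 2) {M : ℝ} {u v : ι → ℝ}
    (hu : ∀ j, |u j| ≤ M) (hv : ∀ j, |v j| ≤ M) (huW : ∑ j, Φ |u j| ≤ W)
    (hvW : ∑ j, Φ |v j| ≤ W) (hM : 0 ≤ M) :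
    ∑ j, (Φ |u j| - Φ |v j|) ^ 2 ≤
      (√(q ^ 2 * (a * (Φ M / M ^ r)) * (2 * W)) * ‖u - v‖ ^ (r / 2)) ^ 2 := by
  have hΦM := hΦ.nonneg M hM
  have hW : 0 ≤ W := (Finset.sum_nonneg fun j _ ↦ hΦ.nonneg _ (abs_nonneg (u j))).trans huW
  have hj : ∀ j, (Φ |u j| - Φ |v j|) ^ 2 ≤
      q ^ 2 * (a * (Φ M / M ^ r)) * (Φ |u j| + Φ |v j|) * ‖u - v‖ ^ r := fun j ↦ by
    have hu₀ := hΦ.nonneg _ (abs_nonneg (u j))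
    have hv₀ := hΦ.nonneg _ (abs_nonneg (v j))
    refine (hΦ.sq_sub_le hd hq hi ha hr hr₂ ⟨abs_nonneg _, hv j⟩ ⟨abs_nonneg _, hu j⟩).trans ?_
    gcongr
    exact (abs_abs_sub_abs_le_abs_sub _ _).trans (norm_le_pi_norm (u - v) j)
  calc ∑ j, (Φ |u j| - Φ |v j|) ^ 2
      ≤ ∑ j, q ^ 2 * (a * (Φ M / M ^ r)) * (Φ |u j| + Φ |v j|) * ‖u - v‖ ^ r :=
        Finset.sum_le_sum fun j _ ↦ hj j
    _ = q ^ 2 * (a * (Φ M / M ^ r)) * (∑ j, Φ |u j| + ∑ j, Φ |v j|) * ‖u - v‖ ^ r := by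
        rw [← Finset.sum_mul, ← Finset.mul_sum, Finset.sum_add_distrib]
    _ ≤ q ^ 2 * (a * (Φ M / M ^ r)) * (2 * W) * ‖u - v‖ ^ r := by
        gcongr
        linarith
    _ = _ := by
        rw [mul_pow, Real.sq_sqrt (by positivity), ← Real.rpow_mul_natCast (norm_nonneg _)]
        simp

variable {Ω : Type*} [TopologicalSpace Ω] [CompactSpace Ω] [MeasurableSpace Ω] [BorelSpace Ω]
  {μ : Measure Ω} [IsProbabilityMeasure μ] {X : Submodule ℝ (Ω → ℝ)}

namespace IsPhiPrefun

lemma exists_finset_sampling_orliczBall (hΦ : IsPhiPrefun Φ) (hd : DecQ Φ q) (hq : 1 ≤ q)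
    (hi : AIncP Φ r a) (ha : 0 ≤ a) (hr : 0 < r) (hr₂ : r ≤ 2) (hH : 0 ≤ H)
    (hX : ∀ f ∈ X, Continuous f) (hNI : ∀ f ∈ X, supNorm f ≤ H * √(∫ y, f y ^ 2 ∂μ))
    (x : Fin m → Ω) {n : ℕ} {ε : ℝ}
    (hε : entropyNumD (fun f g : Ω → ℝ ↦ ⨆ j, |f (x j) - g (x j)|) (lpBall μ r X) n < ε) :
    ∃ C : Finset (sampling X x).range, C.card ≤ (if n = 0 then 1 else 2 ^ 2 ^ n) ∧
      ∀ f : orliczBall μ Φ X, ∃ c ∈ C,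
        ‖(sampling X x).rangeRestrict ⟨f, f.2.1⟩ - c‖ ≤ embeddingConst Φ a r * ε := by
  classical
  obtain ⟨T, hcard, hT⟩ := exists_finset_of_entropyNumD_lt ⟨0, zero_mem_lpBall hr⟩
    (iSup_abs_sub_le (fun f ↦ abs_le_of_mem_lpBall hr hr₂ hH hX hNI) x) hε
  have hR := hΦ.embeddingConst_pos (r := r) ha
  set R := embeddingConst Φ a r
  refine ⟨T.image fun g : lpBall μ r X ↦ R • (sampling X x).rangeRestrict ⟨g, g.2.1⟩,
    Finset.card_image_le.trans hcard, fun f ↦ ?_⟩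
  have hfR := hΦ.inv_smul_mem_lpBall hd hq hi ha hr hX f.2
  obtain ⟨g, hg, hfg⟩ := hT ⟨R⁻¹ • (f : Ω → ℝ), hfR⟩
  rw [iSup_abs_sub_eq_dist, dist_eq_norm] at hfg
  refine ⟨_, Finset.mem_image_of_mem _ hg, ?_⟩
  have hscale : sampling X x ⟨f, f.2.1⟩ - R • sampling X x ⟨g, g.2.1⟩ =
      R • ((R⁻¹ • (f : Ω → ℝ)) ∘ x - (g : Ω → ℝ) ∘ x) := by
    ext j
    simp [sampling, mul_sub, hR.ne']
  change ‖sampling X x ⟨f, f.2.1⟩ - R • sampling X x ⟨g, g.2.1⟩‖ ≤ R * ε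
  rw [hscale, norm_smul, Real.norm_of_nonneg hR.le]
  gcongr

lemma sqrt_mul_embeddingConst_rpow_half (hΦ : IsPhiPrefun Φ) (ha : 0 ≤ a) (hr : 0 < r)
    (hH : 0 ≤ H) (b : ℝ) :
    √(q ^ 2 * (a * (b / (embeddingConst Φ a r * H ^ (2 / r)) ^ r)) * (2 * W)) *
      embeddingConst Φ a r ^ (r / 2) = √(q ^ 2 * a * (b / H ^ 2) * (2 * W)) := by
  have hR := hΦ.one_add_div_pos ha
  have hhalf : embeddingConst Φ a r ^ (r / 2) = √(1 + a / Φ 1) := by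
    rw [← hΦ.embeddingConst_rpow ha hr, Real.sqrt_eq_rpow,
      ← Real.rpow_mul (hΦ.embeddingConst_pos ha).le, mul_one_div]
  rw [hhalf, ← Real.sqrt_mul' _ hR.le, embeddingConst, rpow_mul_rpow_rpow hR.le hH hr]
  congr 1
  rw [← div_div, div_right_comm]
  field_simp

lemma rademacherAverage_sampling_orliczBall_le [FiniteDimensional ℝ X] (hΦ : IsPhiPrefun Φ)
    (hd : DecQ Φ q) (hq : 1 ≤ q) (hi : AIncP Φ r a) (ha : 1 ≤ a) (hr : 1 ≤ r) (hr₂ : r ≤ 2)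
    (hH : 0 ≤ H) (hX : ∀ f ∈ X, Continuous f)
    (hNI : ∀ f ∈ X, supNorm f ≤ H * √(∫ y, f y ^ 2 ∂μ)) (x : Fin m → Ω)
    (hW : ∀ f ∈ orliczBall μ Φ X, ∑ j, Φ |f (x j)| ≤ W) :
    rademacherAverage (fun (f : orliczBall μ Φ X) j ↦ Φ |(f : Ω → ℝ) (x j)|) ≤
      128 * √(q ^ 2 * a * (Φ (embeddingConst Φ a r * H ^ (2 / r)) / H ^ 2) * (2 * W)) *
        entropySum μ r X x := by
  rw [← hΦ.sqrt_mul_embeddingConst_rpow_half (zero_le_one.trans ha) (one_pos.trans_le hr) hH]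
  have hr₀ : 0 < r := one_pos.trans_le hr
  have ha₀ : 0 ≤ a := zero_le_one.trans ha
  have hR := hΦ.embeddingConst_pos (r := r) ha₀
  have hbound := fun f : orliczBall μ Φ X ↦
    hΦ.abs_le_of_mem_orliczBall hd hq hi ha₀ hr₀ hr₂ hH hX hNI f.2
  set R := embeddingConst Φ a r
  set e := entropyNumD (fun f g : Ω → ℝ ↦ ⨆ j, |f (x j) - g (x j)|) (lpBall μ r X)
  set D := √(q ^ 2 * (a * (Φ (R * H ^ (2 / r)) / (R * H ^ (2 / r)) ^ r)) * (2 * W))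
  refine le_mul_sum_rpow_of_forall_pos_add (by positivity) fun η hη ↦ ?_
  have he : ∀ n, 0 < e n + η := fun n ↦ add_pos_of_nonneg_of_pos (entropyNumD_nonneg _ _ n) hη
  have hchain := rademacherAverage_le_sum_covering_radii
    (a := fun (f : orliczBall μ Φ X) j ↦ Φ |(f : Ω → ℝ) (x j)|)
    (f := fun f ↦ (sampling X x).rangeRestrict ⟨f, f.2.1⟩) (Real.sqrt_nonneg _ : 0 ≤ D)
    (by linarith) (by linarith)
    (fun f g ↦ hΦ.sum_sq_sub_le hd hq hi ha hr₀ hr₂ (fun j ↦ hbound f (x j))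
      (fun j ↦ hbound g (x j)) (hW f f.2) (hW g g.2) (by positivity))
    (k₀ := ⟨0, hΦ.zero_mem_orliczBall⟩) (by ext j; simp [hΦ.map_zero])
    ((LinearMap.finrank_range_le _).trans (Nat.lt_pow_succ_log_self one_lt_two _).le)
    (fun n ↦ mul_pos hR (he n))
    (fun n ↦ hΦ.exists_finset_sampling_orliczBall hd hq hi ha₀ hr₀ hr₂ hH hX hNI x
      (lt_add_of_pos_right (e n) hη))
  refine hchain.trans_eq ?_
  simp_rw [Real.mul_rpow hR.le (he _).le, mul_left_comm _ (R ^ (r / 2)), ← Finset.mul_sum]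
  ring

end IsPhiPrefun

end FixedSample

section SelfBounding

variable {α : Type*} [MeasurableSpace α] {ν : Measure α} {S G : α → ℝ}

lemma memLp_two_sqrt_one_add [IsFiniteMeasure ν] (hS : Integrable S ν) (hS₀ : 0 ≤ S) :
    MemLp (fun x ↦ √(1 + S x)) 2 ν := by
  refine (memLp_two_iff_integrable_sq
    (Real.continuous_sqrt.comp_aestronglyMeasurable (hS.1.const_add 1))).2 ?_
  simp_rw [Real.sq_sqrt (add_nonneg zero_le_one (hS₀ _))]
  exact (integrable_const 1).add hS

lemma integral_sqrt_one_add_mul_le [IsProbabilityMeasure ν] (hS : Integrable S ν) (hS₀ : 0 ≤ S)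
    (hG : MemLp G 2 ν) (hG₀ : 0 ≤ G) :
    ∫ x, √(1 + S x) * G x ∂ν ≤ √(1 + ∫ x, S x ∂ν) * √(∫ x, G x ^ 2 ∂ν) := by
  have hHolder := integral_mul_le_Lp_mul_Lq_of_nonneg (Real.HolderConjugate.two_two)
    (.of_forall fun x ↦ Real.sqrt_nonneg (1 + S x)) (.of_forall hG₀)
    (by simpa using memLp_two_sqrt_one_add hS hS₀) (by simpa using hG)
  simp_rw [Real.rpow_two, Real.sq_sqrt (add_nonneg zero_le_one (hS₀ _)),
    integral_add (integrable_const (1 : ℝ)) hS, ← Real.sqrt_eq_rpow] at hHolder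
  simpa using hHolder

lemma le_of_le_mul_sqrt_mul_one_add {E A K : ℝ} (hE : 0 ≤ E) (hA : 0 ≤ A) (hK : 1 ≤ K)
    (h : E ≤ K * √(A * (1 + E))) : E ≤ K ^ 2 * (A + √A) := by
  by_contra! hlt
  have hK₂ : K * √A ≤ K ^ 2 * √A := by gcongr; exact le_self_pow₀ hK two_ne_zero
  have hKA : 0 ≤ K ^ 2 * A := by positivity
  have hE₀ : 0 < E := lt_of_le_of_lt (by positivity) hlt
  have hsq : E ^ 2 ≤ K ^ 2 * (A * (1 + E)) := by
    simpa [mul_pow, Real.sq_sqrt (show 0 ≤ A * (1 + E) by positivity)] using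
      pow_le_pow_left₀ hE h 2
  refine lt_irrefl (K ^ 2 * A) ?_
  calc K ^ 2 * A = K * √A * (K * √A) := by rw [mul_mul_mul_comm, Real.mul_self_sqrt hA, sq]
    _ ≤ E * (K * √A) := by gcongr; linarith
    _ < E * (E - K ^ 2 * A) := by gcongr; linarith
    _ ≤ K ^ 2 * A := by linarith

end SelfBounding

section EmpiricalDeviation

variable {κ Ω : Type*} [MeasurableSpace Ω] {m : ℕ}

/-- The uniform deviation `sup_k |(1/m) ∑ g_k(x_j) - ∫ g_k dμ|` of the sample means of a family of
functions from their means. -/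
noncomputable def empiricalDeviation (μ : Measure Ω) (g : κ → Ω → ℝ) (x : Fin m → Ω) : ℝ :=
  ⨆ k, |(∑ j, g k (x j)) / m - ∫ y, g k y ∂μ|

variable {μ : Measure Ω} {g : κ → Ω → ℝ} {B : ℝ}

lemma empiricalDeviation_nonneg (μ : Measure Ω) (g : κ → Ω → ℝ) (x : Fin m → Ω) :
    0 ≤ empiricalDeviation μ g x :=
  Real.iSup_nonneg fun _ ↦ abs_nonneg _

lemma empiricalDeviation_eq_div (hm : m ≠ 0) (x : Fin m → Ω) :
    empiricalDeviation μ g x = (⨆ k, |∑ j, (g k (x j) - ∫ y, g k y ∂μ)|) / m := by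
  have hm₀ : (m : ℝ) ≠ 0 := Nat.cast_ne_zero.2 hm
  rw [div_eq_mul_inv, Real.iSup_mul_of_nonneg (by positivity)]
  refine iSup_congr fun k ↦ ?_
  rw [← abs_of_nonneg (inv_nonneg.2 (Nat.cast_nonneg (α := ℝ) m)), ← abs_mul,
    Finset.sum_sub_distrib, Finset.sum_const, Finset.card_univ, Fintype.card_fin, nsmul_eq_mul]
  congr 1
  field_simp

variable [IsProbabilityMeasure μ]

lemma abs_sub_integral_le (hB : ∀ k y, |g k y| ≤ B) (k : κ) (y : Ω) :
    |g k y - ∫ z, g k z ∂μ| ≤ B + B := by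
  have hmean := norm_integral_le_of_norm_le_const (μ := μ) (f := g k) (.of_forall (hB k))
  rw [probReal_univ, mul_one] at hmean
  exact (abs_sub _ _).trans (add_le_add (hB k y) hmean)

lemma sum_le_mul_one_add_empiricalDeviation (hB : ∀ k y, |g k y| ≤ B) (hm : m ≠ 0)
    (hg₁ : ∀ k, ∫ y, g k y ∂μ ≤ 1) (x : Fin m → Ω) (k : κ) :
    ∑ j, g k (x j) ≤ m * (1 + empiricalDeviation μ g x) := by
  have hm₀ : (m : ℝ) ≠ 0 := Nat.cast_ne_zero.2 hm
  have hle : |∑ j, (g k (x j) - ∫ y, g k y ∂μ)| ≤ m * empiricalDeviation μ g x := by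
    rw [empiricalDeviation_eq_div hm, mul_div_cancel₀ _ hm₀]
    exact le_ciSup (bddAbove_range_abs_sum fun k j ↦ abs_sub_integral_le hB k (x j)) k
  rw [Finset.sum_sub_distrib, Finset.sum_const, Finset.card_univ, Fintype.card_fin,
    nsmul_eq_mul] at hle
  have hmean : m * ∫ y, g k y ∂μ ≤ m * 1 := by gcongr; exact hg₁ k
  linarith [le_of_abs_le hle]

variable [TopologicalSpace Ω] [SecondCountableTopology Ω] [BorelSpace Ω]

lemma integrable_empiricalDeviation (hg : ∀ k, Continuous (g k)) (hB : ∀ k y, |g k y| ≤ B)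
    (hm : m ≠ 0) :
    Integrable (fun x : Fin m → Ω ↦ empiricalDeviation μ g x) (Measure.pi fun _ ↦ μ) := by
  simp_rw [empiricalDeviation_eq_div hm]
  exact (integrable_iSup_abs_sum (Z := Fin m → Ω)
    (F := fun k j x ↦ g k (x j) - ∫ y, g k y ∂μ) (fun k j ↦ by have := hg k; fun_prop)
    fun k j x ↦ abs_sub_integral_le hB k (x j)).div_const _

lemma integral_empiricalDeviation_le_rademacherAverage (hg : ∀ k, Continuous (g k))
    (hB : ∀ k y, |g k y| ≤ B) (hm : m ≠ 0) :
    ∫ x : Fin m → Ω, empiricalDeviation μ g x ∂Measure.pi (fun _ ↦ μ) ≤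
      2 / m * ∫ x, rademacherAverage (fun k j ↦ g k (x j)) ∂Measure.pi (fun _ : Fin m ↦ μ) := by
  simp_rw [empiricalDeviation_eq_div hm, integral_div]
  rw [div_mul_eq_mul_div]
  gcongr
  exact integral_iSup_abs_sum_sub_integral_le_rademacherAverage hg hB

lemma integral_empiricalDeviation_le_of_rademacherAverage_le {g : κ → Ω → ℝ} {B : ℝ}
    (hg : ∀ k, Continuous (g k)) (hB : ∀ k y, |g k y| ≤ B) (hm : m ≠ 0) {G : (Fin m → Ω) → ℝ}
    (hG : MemLp G 2 (Measure.pi fun _ ↦ μ)) (hG₀ : 0 ≤ G) {K b : ℝ} (hK : 0 ≤ K) (hb : 0 ≤ b)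
    (hrad : ∀ x, rademacherAverage (fun k j ↦ g k (x j)) ≤
      m * (K * (√(b * (1 + empiricalDeviation μ g x)) * G x))) :
    ∫ x : Fin m → Ω, empiricalDeviation μ g x ∂Measure.pi (fun _ ↦ μ) ≤
      2 * K * √(b * (∫ x, G x ^ 2 ∂Measure.pi fun _ ↦ μ) *
        (1 + ∫ x : Fin m → Ω, empiricalDeviation μ g x ∂Measure.pi fun _ ↦ μ)) := by
  set ν : Measure (Fin m → Ω) := Measure.pi fun _ ↦ μ
  set S : (Fin m → Ω) → ℝ := empiricalDeviation μ g
  have hS₀ : 0 ≤ S := empiricalDeviation_nonneg μ g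
  have hS : Integrable S ν := integrable_empiricalDeviation hg hB hm
  have : (0 : ℝ) < m := Nat.cast_pos.2 (Nat.pos_of_ne_zero hm)
  have hint : Integrable (fun x ↦ √(1 + S x) * G x) ν :=
    (memLp_two_sqrt_one_add hS hS₀).integrable_mul hG
  simp_rw [Real.sqrt_mul hb, mul_assoc √b] at hrad
  calc ∫ x, S x ∂ν ≤ 2 / m * ∫ x, rademacherAverage (fun k j ↦ g k (x j)) ∂ν :=
        integral_empiricalDeviation_le_rademacherAverage hg hB hm
    _ ≤ 2 / m * ∫ x, m * (K * (√b * (√(1 + S x) * G x))) ∂ν :=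
        mul_le_mul_of_nonneg_left (integral_mono_of_nonneg
          (.of_forall fun x ↦ rademacherAverage_nonneg _)
          (((hint.const_mul _).const_mul _).const_mul _) (.of_forall hrad)) (by positivity)
    _ = 2 * K * √b * ∫ x, √(1 + S x) * G x ∂ν := by
        simp_rw [integral_const_mul]
        field_simp
    _ ≤ 2 * K * √b * (√(1 + ∫ x, S x ∂ν) * √(∫ x, G x ^ 2 ∂ν)) := by
        gcongr
        exact integral_sqrt_one_add_mul_le hS hS₀ hG hG₀
    _ = _ := by
        rw [mul_assoc b, Real.sqrt_mul hb, Real.sqrt_mul (integral_nonneg fun x ↦ sq_nonneg _)]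
        ring

end EmpiricalDeviation

section MainEstimate

variable {Ω : Type*} [TopologicalSpace Ω] [CompactSpace Ω] [MeasurableSpace Ω] [BorelSpace Ω]
  {μ : Measure Ω} [IsProbabilityMeasure μ] {Φ : ℝ → ℝ} {X : Submodule ℝ (Ω → ℝ)} {q r a H : ℝ}
  {m : ℕ}

lemma IsPhiPrefun.rademacherAverage_sampling_orliczBall_le_empiricalDeviation
    [FiniteDimensional ℝ X] (hΦ : IsPhiPrefun Φ) (hd : DecQ Φ q) (hq : 1 ≤ q)
    (hi : AIncP Φ r a) (ha : 1 ≤ a) (hr : 1 ≤ r) (hr₂ : r ≤ 2) (hH : 0 ≤ H)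
    (hX : ∀ f ∈ X, Continuous f) (hNI : ∀ f ∈ X, supNorm f ≤ H * √(∫ y, f y ^ 2 ∂μ))
    (hm : m ≠ 0) (x : Fin m → Ω) :
    rademacherAverage (fun (f : orliczBall μ Φ X) j ↦ Φ |(f : Ω → ℝ) (x j)|) ≤
      m * (128 * √2 * (√(1 / m * q ^ 2 * a *
        (Φ (embeddingConst Φ a r * H ^ (2 / r)) / H ^ 2) *
        (1 + empiricalDeviation μ (fun (f : orliczBall μ Φ X) y ↦ Φ |(f : Ω → ℝ) y|) x)) *
        entropySum μ r X x)) := by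
  have hm₀ : (m : ℝ) ≠ 0 := Nat.cast_ne_zero.2 hm
  set g : orliczBall μ Φ X → Ω → ℝ := fun f y ↦ Φ |(f : Ω → ℝ) y|
  have hB : ∀ f y, |g f y| ≤ Φ (embeddingConst Φ a r * H ^ (2 / r)) := fun f ↦
    hΦ.abs_comp_le_of_mem_orliczBall hd hq hi (by linarith) (by linarith) hr₂ hH hX hNI f.2
  have hg₁ : ∀ f, ∫ y, g f y ∂μ ≤ 1 := fun f ↦
    hΦ.integral_le_one_of_luxNorm_lt_one hd hq (hX f f.2.1) f.2.2
  refine (hΦ.rademacherAverage_sampling_orliczBall_le hd hq hi ha hr hr₂ hH hX hNI x fun f hf ↦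
    sum_le_mul_one_add_empiricalDeviation hB hm hg₁ x ⟨f, hf⟩).trans_eq ?_
  set b := Φ (embeddingConst Φ a r * H ^ (2 / r)) / H ^ 2
  set S := empiricalDeviation μ g x
  have hscale : q ^ 2 * a * b * (2 * (m * (1 + S))) =
      m ^ 2 * (2 * (1 / m * q ^ 2 * a * b * (1 + S))) := by field_simp
  rw [hscale, Real.sqrt_mul (sq_nonneg _), Real.sqrt_sq (Nat.cast_nonneg m),
    Real.sqrt_mul zero_le_two]
  ring

lemma sSup_eq_empiricalDeviation_orliczBall {Ω : Type*} [MeasurableSpace Ω] (μ : Measure Ω)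
    (Φ : ℝ → ℝ) (X : Submodule ℝ (Ω → ℝ)) (x : Fin m → Ω) :
    sSup {v | ∃ f ∈ X, luxNorm μ Φ f < 1 ∧ v = |(∑ j, Φ |f (x j)|) / m - ∫ y, Φ |f y| ∂μ|} =
      empiricalDeviation μ (fun (f : orliczBall μ Φ X) y ↦ Φ |(f : Ω → ℝ) y|) x := by
  rw [empiricalDeviation, iSup]
  congr 1
  ext v
  simp [orliczBall, and_assoc, eq_comm]

theorem statement7_general [SecondCountableTopology Ω] [FiniteDimensional ℝ X]
    (hΦ : IsPhiPrefun Φ) (hd : DecQ Φ q) (hq : 1 ≤ q) (hi : AIncP Φ r a) (ha : 1 ≤ a) (hr : 1 ≤ r)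
    (hr₂ : r ≤ 2) (hH : 0 < H) (hX : ∀ f ∈ X, Continuous f)
    (hNI : ∀ f ∈ X, supNorm f ≤ H * √(∫ y, f y ^ 2 ∂μ)) (hm : m ≠ 0) {A : ℝ}
    (hA : A = 1 / m * q ^ 2 * a * (Φ (embeddingConst Φ a r * H ^ (2 / r)) / H ^ 2) *
      ∫ x : Fin m → Ω, entropySum μ r X x ^ 2 ∂Measure.pi fun _ ↦ μ) :
    ∫ x : Fin m → Ω, empiricalDeviation μ (fun (f : orliczBall μ Φ X) y ↦ Φ |(f : Ω → ℝ) y|) x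
      ∂Measure.pi (fun _ ↦ μ) ≤ 131072 * (A + √A) := by
  have ha₀ : 0 ≤ a := by linarith
  have hr₀ : 0 < r := by linarith
  have hb : 0 ≤ 1 / m * q ^ 2 * a * (Φ (embeddingConst Φ a r * H ^ (2 / r)) / H ^ 2) := by
    have := hΦ.nonneg (embeddingConst Φ a r * H ^ (2 / r))
      (mul_nonneg (hΦ.embeddingConst_pos ha₀).le (by positivity))
    positivity
  have hA₀ : 0 ≤ A := hA ▸ mul_nonneg hb (integral_nonneg fun x ↦ sq_nonneg _)
  have hG := continuous_entropySum (m := m) hr₀ hr₂ hH.le hX hNI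
  have hself := integral_empiricalDeviation_le_of_rademacherAverage_le
    (g := fun (f : orliczBall μ Φ X) y ↦ Φ |(f : Ω → ℝ) y|)
    (fun f ↦ hΦ.continuous_comp_abs hd hq (hX f f.2.1))
    (fun f ↦ hΦ.abs_comp_le_of_mem_orliczBall hd hq hi ha₀ hr₀ hr₂ hH.le hX hNI f.2) hm
    ((memLp_two_iff_integrable_sq hG.aestronglyMeasurable).2 (integrable_of_continuous (hG.pow 2)))
    entropySum_nonneg (by positivity) hb
    (hΦ.rademacherAverage_sampling_orliczBall_le_empiricalDeviation hd hq hi ha hr hr₂ hH.le hX hNI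
      hm)
  rw [← hA] at hself
  have hK : (2 * (128 * √2)) ^ 2 = (131072 : ℝ) := by norm_num [mul_pow]
  rw [← hK]
  refine le_of_le_mul_sqrt_mul_one_add
    (integral_nonneg fun x ↦ empiricalDeviation_nonneg μ _ x) hA₀ ?_ hself
  nlinarith [Real.one_le_sqrt.2 one_le_two]

end MainEstimate

/-- Proposition cor-key. With `p_* = min{p,2}`, `R_Φ(p_*) =
(1 + a_Φ(p_*)/Φ(1))^{1/p_*}`, there is a numerical constant `c > 0` such that for every
Φ-function `Φ ∈ (aInc)_p ∩ (Dec)_q` and every `N`-dimensional subspace `X_N ∈ NI_{2,∞}(H)`,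
for i.i.d. points `x₁,…,x_m ∼ μ`,
`E(sup_{f ∈ X_N^Φ} |(1/m) Σ_j Φ(|f(x_j)|) − ∫ Φ(|f|) dμ|) ≤ c (A + √A)` where
`A = (1/m) q² a_Φ(p_*) (Φ(R_Φ(p_*) H^{2/p_*})/H²) ·
E((Σ_{n ≤ ⌊log₂ N⌋} 2^{n/2} e_n(X_N^{p_*}, ‖·‖_{∞,x})^{p_*/2})²)`. -/
theorem statement7 :
    ∃ c : ℝ, 0 < c ∧
      ∀ p q : ℝ, 1 ≤ p → p ≤ q →
      ∀ N : ℕ, 1 ≤ N → ∀ H : ℝ, 1 ≤ H →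
      ∀ (Ω : Type) [MetricSpace Ω] [CompactSpace Ω] [MeasurableSpace Ω] [BorelSpace Ω],
      ∀ (μ : Measure Ω) [IsProbabilityMeasure μ],
      ∀ Φ : ℝ → ℝ, IsPhiPrefun Φ → (∃ a : ℝ, 1 ≤ a ∧ AIncP Φ 1 a) →
      ∀ aP aPs : ℝ, 1 ≤ aP → AIncP Φ p aP → 1 ≤ aPs → AIncP Φ (min p 2) aPs →
        DecQ Φ q →
      ∀ X : Submodule ℝ (Ω → ℝ),
        (∀ f ∈ X, Continuous f) →
        Module.finrank ℝ X = N →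
        (∀ f ∈ X, supNorm f ≤ H * Real.sqrt (∫ y, (f y) ^ 2 ∂μ)) →
      ∀ m : ℕ, 1 ≤ m →
      ∀ A : ℝ,
        A = (1 / (m : ℝ)) * q ^ 2 * aPs *
            (Φ ((1 + aPs / Φ 1) ^ (1 / min p 2) * H ^ (2 / min p 2)) / H ^ 2) *
            (∫ x : Fin m → Ω,
              (∑ n ∈ Finset.range (Nat.log 2 N + 1),
                (2 : ℝ) ^ ((n : ℝ) / 2) *
                  (entropyNumD (fun f g : Ω → ℝ => ⨆ j, |f (x j) - g (x j)|)
                      {f : Ω → ℝ | f ∈ X ∧ (∫ y, |f y| ^ min p 2 ∂μ) ^ (1 / min p 2) < 1}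
                      n) ^ (min p 2 / 2)) ^ 2
              ∂(Measure.pi fun _ : Fin m => μ)) →
        (∫ x : Fin m → Ω,
            sSup {v : ℝ | ∃ f ∈ X, luxNorm μ Φ f < 1 ∧
              v = |(∑ j, Φ (|f (x j)|)) / (m : ℝ) - ∫ y, Φ (|f y|) ∂μ|}
            ∂(Measure.pi fun _ : Fin m => μ)) ≤
          c * (A + Real.sqrt A) := by
  refine ⟨131072, by norm_num, ?_⟩
  intro p q hp hpq N hN H hH Ω _ _ _ _ μ _ Φ hΦ _ aP aPs _ _ haPs hi hd X hX hdim hNI m hm A hA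
  have : FiniteDimensional ℝ X := FiniteDimensional.of_finrank_pos (by omega)
  subst hdim
  simp_rw [sSup_eq_empiricalDeviation_orliczBall]
  exact statement7_general hΦ hd (hp.trans hpq) hi haPs (le_min hp one_le_two) (min_le_right p 2)
    (one_pos.trans_le hH) hX hNI (Nat.one_le_iff_ne_zero.1 hm) hA
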